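/- arXiv:1104.3207 — 6 statements merged into one kernel-verified Lean document; each statement's English description precedes it below -/
import Mathlib

section
/- Let X and Y be finite types, let E ⊆ X × Y be a set of edges of a bipartite graph, and let α, β, γ be natural numbers. If R_E(α, β) · 2^γ < |E|, then the triple (α, β, γ) does not belong to the profile of E. -/
/-- A triple `(α, β, γ)` belongs to the profile of `E ⊆ X × Y`. -/
def InProfile {X Y : Type*} (E : Set (X × Y)) (α β γ : ℕ) : Prop :=
  ∃ (f : Fin (2 ^ α) × Fin (2 ^ γ) → X) (g : Fin (2 ^ β) × Fin (2 ^ γ) → Y),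
    ∀ p ∈ E, ∃ (a : Fin (2 ^ α)) (b : Fin (2 ^ β)) (c : Fin (2 ^ γ)),
      f (a, c) = p.1 ∧ g (b, c) = p.2

/-- `R_E(α, β)`: the maximal number of edges of `E` in a combinatorial rectangle
`X' × Y'` with `|X'| ≤ 2^α` and `|Y'| ≤ 2^β`. -/
def maxRect {X Y : Type*} [Fintype X] [Fintype Y] [DecidableEq X] [DecidableEq Y]
    (E : Finset (X × Y)) (α β : ℕ) : ℕ :=
  ((Finset.univ.powerset.filter fun A : Finset X => A.card ≤ 2 ^ α) ×ˢ
   (Finset.univ.powerset.filter fun B : Finset Y => B.card ≤ 2 ^ β)).sup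
    fun AB => (E.filter fun p => p.1 ∈ AB.1 ∧ p.2 ∈ AB.2).card

/-! For each fixed third coordinate `c`, the values of `f (·, c)` and `g (·, c)` span a
combinatorial rectangle with sides at most `2 ^ α` and `2 ^ β`. A triple in the profile thus covers
`E` by `2 ^ γ` such rectangles, and counting edges rectangle by rectangle bounds `|E|`. -/

theorem card_le_card_mul_of_subset_biUnion {ι V : Type*} [DecidableEq V] {I : Finset ι}
    {S : Finset V} {t : ι → Finset V} {m : ℕ} (hS : S ⊆ I.biUnion t)
    (hm : ∀ i ∈ I, (S ∩ t i).card ≤ m) : S.card ≤ I.card * m := by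
  rw [← Finset.inter_eq_left.mpr hS, Finset.inter_biUnion]
  exact Finset.card_biUnion_le_card_mul I _ m hm

theorem InProfile.exists_rectangle_cover {X Y : Type*} {E : Set (X × Y)} {α β γ : ℕ}
    (h : InProfile E α β γ) :
    ∃ (A : Fin (2 ^ γ) → Finset X) (B : Fin (2 ^ γ) → Finset Y),
      (∀ c, (A c).card ≤ 2 ^ α) ∧ (∀ c, (B c).card ≤ 2 ^ β) ∧
        ∀ p ∈ E, ∃ c, p ∈ A c ×ˢ B c := by
  classical
  obtain ⟨f, g, hfg⟩ := h
  refine ⟨fun c => Finset.univ.image fun a => f (a, c),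
    fun c => Finset.univ.image fun b => g (b, c),
    fun c => Finset.card_image_le.trans_eq (Finset.card_fin _),
    fun c => Finset.card_image_le.trans_eq (Finset.card_fin _), fun p hp => ?_⟩
  obtain ⟨a, b, c, hf, hg⟩ := hfg p hp
  exact ⟨c, Finset.mem_product.mpr
    ⟨Finset.mem_image.mpr ⟨a, Finset.mem_univ a, hf⟩,
      Finset.mem_image.mpr ⟨b, Finset.mem_univ b, hg⟩⟩⟩

theorem card_inter_product_le_maxRect {X Y : Type*} [Fintype X] [Fintype Y] [DecidableEq X]
    [DecidableEq Y] (E : Finset (X × Y)) {α β : ℕ} {A : Finset X} {B : Finset Y}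
    (hA : A.card ≤ 2 ^ α) (hB : B.card ≤ 2 ^ β) :
    (E ∩ A ×ˢ B).card ≤ maxRect E α β := by
  have hAB : (A, B) ∈
      (Finset.univ.powerset.filter fun A : Finset X => A.card ≤ 2 ^ α) ×ˢ
        (Finset.univ.powerset.filter fun B : Finset Y => B.card ≤ 2 ^ β) := by
    simp [hA, hB]
  simp only [← Finset.filter_mem_eq_inter, Finset.mem_product]
  exact Finset.le_sup (f := fun AB : Finset X × Finset Y =>
    (E.filter fun p => p.1 ∈ AB.1 ∧ p.2 ∈ AB.2).card) hAB

theorem stmt0_general {X Y : Type*} [DecidableEq X] [DecidableEq Y] {E : Finset (X × Y)}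
    {α β γ m : ℕ}
    (hm : ∀ (A : Finset X) (B : Finset Y), A.card ≤ 2 ^ α → B.card ≤ 2 ^ β →
      (E ∩ A ×ˢ B).card ≤ m)
    (h : m * 2 ^ γ < E.card) : ¬ InProfile (↑E : Set (X × Y)) α β γ := by
  intro hE
  obtain ⟨A, B, hA, hB, hcover⟩ := hE.exists_rectangle_cover
  have hsub : E ⊆ Finset.univ.biUnion fun c => A c ×ˢ B c := fun p hp =>
    have ⟨c, hc⟩ := hcover p hp
    Finset.mem_biUnion.mpr ⟨c, Finset.mem_univ c, hc⟩
  have hcard : E.card ≤ 2 ^ γ * m := by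
    simpa only [Finset.card_fin] using
      card_le_card_mul_of_subset_biUnion hsub fun c _ => hm (A c) (B c) (hA c) (hB c)
  exact (h.trans_le hcard).ne (mul_comm m (2 ^ γ))

theorem stmt0 {X Y : Type*} [Fintype X] [Fintype Y] [DecidableEq X] [DecidableEq Y]
    (E : Finset (X × Y)) (α β γ : ℕ)
    (h : maxRect E α β * 2 ^ γ < E.card) :
    ¬ InProfile (↑E : Set (X × Y)) α β γ :=
  stmt0_general (fun _ _ hA hB => card_inter_product_le_maxRect E hA hB) h
end

section
/- Let X and Y be finite types and let E ⊆ X × Y be a nonempty edge-transitive bipartite graph. Let α, β, γ be natural numbers such that R_E(α, β) · 2^γ ≥ |E|. Then for every natural number γ' with 2^(γ') ≥ 2^γ · (Real.log |E| + 1), the triple (α, β, γ') belongs to the profile of E. -/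
/-- `(σ, τ)` is an automorphism of the bipartite graph `E`. -/
def IsAut {X Y : Type*} (E : Finset (X × Y)) (σ : X ≃ X) (τ : Y ≃ Y) : Prop :=
  ∀ p : X × Y, p ∈ E ↔ (σ p.1, τ p.2) ∈ E

/-- `E` is edge-transitive: any edge can be mapped to any other edge by an automorphism. -/
def EdgeTransitive {X Y : Type*} (E : Finset (X × Y)) : Prop :=
  ∀ p ∈ E, ∀ q ∈ E, ∃ (σ : X ≃ X) (τ : Y ≃ Y),
    IsAut E σ τ ∧ σ p.1 = q.1 ∧ τ p.2 = q.2

/-!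
Averaging over a group acting transitively on a finite set `Ω`, some translate of `S` meets a given
`U` in at least `#U * #S / #Ω` points. Removing such a translate from what is still uncovered, `n`
times over, leaves at most `#Ω * (1 - #S / #Ω) ^ n ≤ #Ω * exp (-n * #S / #Ω)` points, which is less
than one as soon as `#Ω * log #Ω < n * #S`. For the automorphisms of an edge-transitive `E`, acting
on the edges, and `S` the edges in an optimal rectangle, each translate of `S` lies in a rectangle
of the same dimensions, and the index of the translate is the shared coordinate of the profile.
-/

open Finset
open scoped Pointwise

lemma mul_one_sub_pow_lt_one {c x : ℝ} {n : ℕ} (hc : 0 < c) (hx : x ≤ 1)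
    (h : Real.log c < n * x) : c * (1 - x) ^ n < 1 := by
  calc c * (1 - x) ^ n ≤ c * Real.exp (-x) ^ n := by
        gcongr
        exact Real.one_sub_le_exp_neg x
    _ = c * Real.exp (-(n * x)) := by rw [← Real.exp_nat_mul, mul_neg]
    _ < c * Real.exp (-Real.log c) := by gcongr
    _ = 1 := by rw [Real.exp_neg, Real.exp_log hc, mul_inv_cancel₀ hc.ne']

section FiniteAction

variable {G Ω : Type*} [Group G] [MulAction G Ω] [DecidableEq Ω]

lemma card_inter_smul_eq_card_filter_product (g : G) (U S : Finset Ω) :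
    #(U ∩ g • S) = #{p ∈ U ×ˢ S | g • p.2 = p.1} := by
  refine (card_bij (fun p _ ↦ p.1) ?_ ?_ ?_).symm
  · rintro ⟨u, s⟩ hp
    obtain ⟨⟨hu, hs⟩, rfl⟩ : (u ∈ U ∧ s ∈ S) ∧ g • s = u := by simpa using hp
    exact mem_inter.2 ⟨hu, smul_mem_smul_finset hs⟩
  · rintro ⟨u, s⟩ hp ⟨v, t⟩ hq (rfl : u = v)
    have hst : g • s = g • t := (mem_filter.1 hp).2.trans (mem_filter.1 hq).2.symm
    rw [MulAction.injective g hst]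
  · intro u hu
    obtain ⟨huU, s, hs, rfl⟩ : u ∈ U ∧ ∃ s ∈ S, g • s = u := by simpa [mem_smul_finset] using hu
    exact ⟨(g • s, s), by simp [huU, hs], rfl⟩

variable [MulAction.IsPretransitive G Ω] [Fintype Ω]

lemma card_filter_smul_eq_mul_card [Fintype G] (x y : Ω) :
    #{g : G | g • x = y} * Fintype.card Ω = Fintype.card G := by
  have fiber_card_eq (z : Ω) : #{g : G | g • x = z} = #{g : G | g • x = y} := by
    obtain ⟨k, rfl⟩ := MulAction.exists_smul_eq G z y
    exact card_equiv (Equiv.mulLeft k) fun g ↦ by simp [mul_smul]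
  calc #{g : G | g • x = y} * Fintype.card Ω = ∑ z : Ω, #{g : G | g • x = z} := by
        simp [fiber_card_eq, mul_comm]
    _ = Fintype.card G := (card_eq_sum_card_fiberwise fun _ _ ↦ mem_coe.2 (mem_univ _)).symm

lemma sum_card_inter_smul_mul_card [Fintype G] (U S : Finset Ω) :
    (∑ g : G, #(U ∩ g • S)) * Fintype.card Ω = #U * #S * Fintype.card G := by
  calc (∑ g : G, #(U ∩ g • S)) * Fintype.card Ω
      = (∑ p ∈ U ×ˢ S, #{g : G | g • p.2 = p.1}) * Fintype.card Ω := by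
        simp only [card_inter_smul_eq_card_filter_product]
        congr 1
        exact sum_card_bipartiteAbove_eq_sum_card_bipartiteBelow
          (fun (g : G) (p : Ω × Ω) ↦ g • p.2 = p.1)
    _ = #U * #S * Fintype.card G := by
        simp [sum_mul, card_filter_smul_eq_mul_card]

variable (G)

lemma exists_card_mul_card_le_card_inter_smul (U S : Finset Ω) :
    ∃ g : G, #U * #S ≤ Fintype.card Ω * #(U ∩ g • S) := by
  -- `G` may be infinite, but its image in the permutations of `Ω` is not.
  let H := (MulAction.toPermHom G Ω).range
  have : MulAction.IsPretransitive H Ω :=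
    .of_smul_eq (MulAction.toPermHom G Ω).rangeRestrict rfl
  have := Fintype.ofFinite H
  have sum_eq : ∑ _h : H, #U * #S = ∑ h : H, Fintype.card Ω * #(U ∩ h • S) := by
    rw [sum_const, card_univ, smul_eq_mul, ← mul_sum, mul_comm (Fintype.card Ω),
      sum_card_inter_smul_mul_card, mul_comm]
  obtain ⟨⟨_, g, rfl⟩, -, hg⟩ := exists_le_of_sum_le univ_nonempty sum_eq.le
  exact ⟨g, hg⟩

lemma exists_card_compl_smul_le [Nonempty Ω] (S : Finset Ω) (n : ℕ) :
    ∃ T : Finset G, #T ≤ n ∧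
      (#(T • S)ᶜ : ℝ) ≤ Fintype.card Ω * (1 - #S / Fintype.card Ω) ^ n := by
  classical
  have card_pos : (0 : ℝ) < Fintype.card Ω := by exact_mod_cast Fintype.card_pos
  have one_sub_density_nonneg : (0 : ℝ) ≤ 1 - #S / Fintype.card Ω :=
    sub_nonneg.2 (div_le_one_of_le₀ (by exact_mod_cast card_le_univ S) card_pos.le)
  induction n with
  | zero => exact ⟨∅, by simp⟩
  | succ n ih =>
    obtain ⟨T, hT, hU⟩ := ih
    set U := (T • S)ᶜ
    obtain ⟨g, hg⟩ := exists_card_mul_card_le_card_inter_smul G U S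
    have compl_eq : (insert g T • S)ᶜ = U \ g • S := by
      rw [insert_eq, union_smul, singleton_smul, compl_union, inter_comm, sdiff_eq_inter_compl]
    have covered : (#U : ℝ) * (#S / Fintype.card Ω) ≤ #(U ∩ g • S) := by
      rw [← mul_div_assoc, div_le_iff₀' card_pos]
      exact_mod_cast hg
    have split : (#(U \ g • S) : ℝ) + #(U ∩ g • S) = #U := by
      exact_mod_cast card_sdiff_add_card_inter U (g • S)
    refine ⟨insert g T, (card_insert_le g T).trans (Nat.succ_le_succ hT), ?_⟩
    calc (#(insert g T • S)ᶜ : ℝ) = #(U \ g • S) := by rw [compl_eq]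
      _ ≤ #U * (1 - #S / Fintype.card Ω) := by linarith
      _ ≤ Fintype.card Ω * (1 - #S / Fintype.card Ω) ^ n * (1 - #S / Fintype.card Ω) := by
          gcongr
      _ = Fintype.card Ω * (1 - #S / Fintype.card Ω) ^ (n + 1) := by ring

lemma exists_smul_eq_univ_of_card_mul_log_lt (S : Finset Ω) (n : ℕ)
    (h : Fintype.card Ω * Real.log (Fintype.card Ω) < n * #S) :
    ∃ T : Finset G, #T ≤ n ∧ T • S = univ := by
  cases isEmpty_or_nonempty Ω with
  | inl _ => exact ⟨∅, by simp, Subsingleton.elim _ _⟩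
  | inr _ =>
    have card_pos : (0 : ℝ) < Fintype.card Ω := by exact_mod_cast Fintype.card_pos
    obtain ⟨T, hT, hcompl⟩ := exists_card_compl_smul_le G S n
    have lt_one : (#(T • S)ᶜ : ℝ) < 1 := by
      refine hcompl.trans_lt (mul_one_sub_pow_lt_one card_pos ?_ ?_)
      · exact div_le_one_of_le₀ (by exact_mod_cast card_le_univ S) card_pos.le
      · rwa [← mul_div_assoc, lt_div_iff₀' card_pos]
    refine ⟨T, hT, ?_⟩
    rw [← compl_eq_empty_iff, ← card_eq_zero]
    exact Nat.lt_one_iff.1 (by exact_mod_cast lt_one)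

end FiniteAction

section EdgeTransitive

variable {X Y : Type*}

/-- The automorphism group of the bipartite graph `E`; an automorphism acts by one permutation on
each side, so this is a subgroup of a product of permutation groups. -/
def autGroup (E : Finset (X × Y)) : Subgroup (Equiv.Perm X × Equiv.Perm Y) where
  carrier := {g | IsAut E g.1 g.2}
  one_mem' _ := Iff.rfl
  mul_mem' hg hk p := (hk p).trans (hg _)
  inv_mem' {g} hg p := by simpa using (hg (g.1⁻¹ p.1, g.2⁻¹ p.2)).symm

/-- The action of the automorphisms of `E` on its edges, moving both endpoints. -/
instance autGroup.instMulActionEdges (E : Finset (X × Y)) : MulAction (autGroup E) E where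
  smul g p := ⟨(g.1.1 p.1.1, g.1.2 p.1.2), (g.2 p.1).1 p.2⟩
  one_smul _ := rfl
  mul_smul _ _ _ := rfl

lemma autGroup.coe_smul {E : Finset (X × Y)} (g : autGroup E) (p : E) :
    (↑(g • p) : X × Y) = (g.1.1 p.1.1, g.1.2 p.1.2) :=
  rfl

lemma EdgeTransitive.isPretransitive_autGroup {E : Finset (X × Y)} (hE : EdgeTransitive E) :
    MulAction.IsPretransitive (autGroup E) E where
  exists_smul_eq p q := by
    obtain ⟨σ, τ, haut, hσ, hτ⟩ := hE p p.2 q q.2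
    exact ⟨⟨(σ, τ), haut⟩, Subtype.ext (Prod.ext hσ hτ)⟩

lemma exists_fin_coe_subset_range [Nonempty X] (A : Finset X) {n : ℕ} (hA : #A ≤ n) :
    ∃ f : Fin n → X, (A : Set X) ⊆ Set.range f := by
  obtain ⟨e⟩ : Nonempty (A ↪ Fin n) := Function.Embedding.nonempty_of_card_le (by simpa using hA)
  refine ⟨Function.extend e Subtype.val fun _ ↦ Classical.arbitrary X, fun x hx ↦ ?_⟩
  exact ⟨e ⟨x, hx⟩, e.injective.extend_apply _ _ _⟩

lemma InProfile.of_forall_exists_image_eq {ι X' Y' : Type*} [Nonempty ι] [Nonempty X'] [Nonempty Y']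
    {E : Set (X × Y)} {α β γ : ℕ} {A : Finset X'} {B : Finset Y'} {T : Finset ι}
    (hA : #A ≤ 2 ^ α) (hB : #B ≤ 2 ^ β) (hT : #T ≤ 2 ^ γ) (u : ι → X' → X) (v : ι → Y' → Y)
    (hcover : ∀ p ∈ E, ∃ i ∈ T, ∃ x ∈ A, ∃ y ∈ B, (u i x, v i y) = p) :
    InProfile E α β γ := by
  obtain ⟨f, hf⟩ := exists_fin_coe_subset_range A hA
  obtain ⟨g, hg⟩ := exists_fin_coe_subset_range B hB
  obtain ⟨t, ht⟩ := exists_fin_coe_subset_range T hT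
  refine ⟨fun ac ↦ u (t ac.2) (f ac.1), fun bc ↦ v (t bc.2) (g bc.1), fun p hp ↦ ?_⟩
  obtain ⟨i, hi, x, hx, y, hy, rfl⟩ := hcover p hp
  obtain ⟨a, rfl⟩ := hf hx
  obtain ⟨b, rfl⟩ := hg hy
  obtain ⟨c, rfl⟩ := ht hi
  exact ⟨a, b, c, rfl, rfl⟩

lemma exists_card_inter_product_eq_maxRect [Fintype X] [Fintype Y] [DecidableEq X] [DecidableEq Y]
    (E : Finset (X × Y)) (α β : ℕ) :
    ∃ (A : Finset X) (B : Finset Y),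
      #A ≤ 2 ^ α ∧ #B ≤ 2 ^ β ∧ #(E ∩ A ×ˢ B) = maxRect E α β := by
  obtain ⟨⟨A, B⟩, hAB, hmax⟩ := exists_mem_eq_sup
    (({A : Finset X | #A ≤ 2 ^ α} : Finset (Finset X)) ×ˢ
      ({B : Finset Y | #B ≤ 2 ^ β} : Finset (Finset Y)))
    ⟨(∅, ∅), by simp⟩ fun AB ↦ #{p ∈ E | (p : X × Y).1 ∈ AB.1 ∧ p.2 ∈ AB.2}
  obtain ⟨hA, hB⟩ : #A ≤ 2 ^ α ∧ #B ≤ 2 ^ β := by simpa using hAB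
  refine ⟨A, B, hA, hB, ?_⟩
  rw [maxRect, powerset_univ, powerset_univ, hmax, ← filter_mem_eq_inter]
  simp only [mem_product]

lemma mul_log_lt_of_mul_log_add_one_le {n r K N : ℝ} (hn : 1 ≤ n) (hr : 0 ≤ r) (hnr : n ≤ r * K)
    (hN : K * (Real.log n + 1) ≤ N) : n * Real.log n < N * r := by
  have log_nonneg : 0 ≤ Real.log n := Real.log_nonneg hn
  calc n * Real.log n < n * (Real.log n + 1) := by linarith
    _ ≤ r * K * (Real.log n + 1) := by gcongr
    _ = K * (Real.log n + 1) * r := by ring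
    _ ≤ N * r := by gcongr

theorem stmt1_general [DecidableEq X] [DecidableEq Y] {E : Finset (X × Y)}
    (htrans : EdgeTransitive E) {α β γ : ℕ} {A : Finset X} {B : Finset Y}
    (hA : #A ≤ 2 ^ α) (hB : #B ≤ 2 ^ β)
    (hγ : #E * Real.log #E < 2 ^ γ * #(E ∩ A ×ˢ B)) :
    InProfile (E : Set (X × Y)) α β γ := by
  have := htrans.isPretransitive_autGroup
  have rectangle_card : #((A ×ˢ B).subtype (· ∈ E)) = #(E ∩ A ×ˢ B) := by
    rw [card_subtype, filter_mem_eq_inter, inter_comm]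
  obtain ⟨T, hT, hcover⟩ := exists_smul_eq_univ_of_card_mul_log_lt (autGroup E)
    ((A ×ˢ B).subtype (· ∈ E)) (2 ^ γ) (by simpa [rectangle_card] using hγ)
  obtain ⟨⟨x₀, y₀⟩, -⟩ : E.Nonempty := by
    rw [nonempty_iff_ne_empty]
    rintro rfl
    simp at hγ
  have : Nonempty X := ⟨x₀⟩
  have : Nonempty Y := ⟨y₀⟩
  refine .of_forall_exists_image_eq hA hB hT (fun g x ↦ g.1.1 x) (fun g y ↦ g.1.2 y) fun p hp ↦ ?_
  obtain ⟨g, hg, s, hs, hgs⟩ := mem_smul.1 (hcover ▸ mem_univ (⟨p, hp⟩ : E))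
  obtain ⟨hx, hy⟩ := mem_product.1 (mem_subtype.1 hs)
  refine ⟨g, hg, s.1.1, hx, s.1.2, hy, ?_⟩
  rw [← autGroup.coe_smul, hgs]

end EdgeTransitive

theorem stmt1 {X Y : Type*} [Fintype X] [Fintype Y] [DecidableEq X] [DecidableEq Y]
    (E : Finset (X × Y)) (hne : E.Nonempty) (htrans : EdgeTransitive E)
    (α β γ : ℕ) (h : E.card ≤ maxRect E α β * 2 ^ γ)
    (γ' : ℕ) (hγ' : (2 : ℝ) ^ γ' ≥ 2 ^ γ * (Real.log E.card + 1)) :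
    InProfile (↑E : Set (X × Y)) α β γ' := by
  obtain ⟨A, B, hA, hB, hR⟩ := exists_card_inter_product_eq_maxRect E α β
  exact stmt1_general htrans hA hB <| mul_log_lt_of_mul_log_add_one_le
    (mod_cast hne.card_pos) (Nat.cast_nonneg _) (mod_cast hR ▸ h) hγ'
end

section
/- Let X and Y be finite nonempty types and let D be a probability mass function on X × Y whose marginals D_X and D_Y are everywhere positive. Then D is non-degenerate if and only if there exists δ ∈ (0, 1) such that D is δ-hypercontractive. -/
open Finset

/-- Marginal distribution on `X` of a distribution on `X × Y`. -/
noncomputable def margX {X Y : Type*} [Fintype Y] (D : X × Y → ℝ) (x : X) : ℝ :=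
  ∑ y, D (x, y)

/-- Marginal distribution on `Y` of a distribution on `X × Y`. -/
noncomputable def margY {X Y : Type*} [Fintype X] (D : X × Y → ℝ) (y : Y) : ℝ :=
  ∑ x, D (x, y)

/-- The conditional-expectation operator `T_D`: `(T_D f)(x) = E[f(y) | x]`. -/
noncomputable def condOp {X Y : Type*} [Fintype Y] (D : X × Y → ℝ) (f : Y → ℝ) (x : X) : ℝ :=
  (∑ y, D (x, y) * f y) / margX D x

/-- The `L_p` norm of `f` with respect to the weight (probability mass) `w`. -/
noncomputable def wnorm {α : Type*} [Fintype α] (w : α → ℝ) (p : ℝ) (f : α → ℝ) : ℝ :=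
  (∑ a, w a * |f a| ^ p) ^ (1 / p)

/-- `D` is `δ`-hypercontractive: `‖T_D f‖_{2 + δ/(1-δ)} ≤ ‖f‖_{2-δ}` for all `f`. -/
def Hypercontractive {X Y : Type*} [Fintype X] [Fintype Y] (D : X × Y → ℝ) (δ : ℝ) : Prop :=
  ∀ f : Y → ℝ,
    wnorm (margX D) (2 + δ / (1 - δ)) (condOp D f) ≤ wnorm (margY D) (2 - δ) f

/-- `D` is degenerate: there are nonempty proper subsets `A ⊊ X`, `B ⊊ Y` such that
`D` vanishes on `A × Bᶜ` and on `Aᶜ × B`. -/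
def Degenerate {X Y : Type*} (D : X × Y → ℝ) : Prop :=
  ∃ (A : Set X) (B : Set Y), A.Nonempty ∧ A ≠ Set.univ ∧ B.Nonempty ∧ B ≠ Set.univ ∧
    ∀ x y, ((x ∈ A ∧ y ∉ B) ∨ (x ∉ A ∧ y ∈ B)) → D (x, y) = 0

/-!
Since `2 + δ / (1 - δ)` is the exponent conjugate to `p = 2 - δ`, hypercontractivity is dual to
`𝔼 (F G) ≤ ‖F‖_p ‖G‖_p` for `F, G ≥ 0`. Put `p = 2 / (1 + ε)`, `F = u ^ (1 + ε)` and
`G = v ^ (1 + ε)`: the claim is `𝔼 (u v) ^ (1 + ε) ≤ 1` whenever `𝔼 u² = 𝔼 v² = 1`. By the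
Bernoulli inequality, the left side is at most `𝔼 (u v) + ε 𝔼 (u v - 1) + ε 𝔼 (u v - 1)²`. The
normalisation gives `𝔼 (u v) = 1 - 𝔼 (u - v)² / 2`, so the quadratic error is absorbed for small `ε`
as soon as `𝔼 (u v - 1)² ≤ K 𝔼 (u - v)²`. This holds because the bipartite graph of the support of
`D` is connected: if `u` and `v` nearly agree along its edges, then both are nearly constant.

Conversely, for a degenerate `D` the operator `T_D` maps the indicator of `B` to that of `A`, where
`A` and `B` have the same measure `m ∈ (0, 1)`, and `m ^ (1 / q) > m ^ (1 / p)` for `q > p`.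
-/

section WeightedNorm

variable {α : Type*} [Fintype α] {w : α → ℝ}

lemma sum_mul_rpow_abs_nonneg (hw : ∀ a, 0 ≤ w a) (p : ℝ) (f : α → ℝ) :
    0 ≤ ∑ a, w a * |f a| ^ p :=
  sum_nonneg fun a _ => mul_nonneg (hw a) (Real.rpow_nonneg (abs_nonneg _) _)

lemma wnorm_nonneg (hw : ∀ a, 0 ≤ w a) (p : ℝ) (f : α → ℝ) : 0 ≤ wnorm w p f :=
  Real.rpow_nonneg (sum_mul_rpow_abs_nonneg hw p f) _

lemma wnorm_abs (w : α → ℝ) (p : ℝ) (f : α → ℝ) : wnorm w p |f| = wnorm w p f := by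
  simp only [wnorm, Pi.abs_apply, abs_abs]

lemma wnorm_pos (hw : ∀ a, 0 < w a) (p : ℝ) {f : α → ℝ} (hf : f ≠ 0) : 0 < wnorm w p f := by
  obtain ⟨a, ha⟩ := Function.ne_iff.1 hf
  refine Real.rpow_pos_of_pos (sum_pos' (fun b _ => ?_) ⟨a, mem_univ a, ?_⟩) _
  · exact mul_nonneg (hw b).le (Real.rpow_nonneg (abs_nonneg _) _)
  · exact mul_pos (hw a) (Real.rpow_pos_of_pos (abs_pos.2 ha) _)

lemma wnorm_smul (hw : ∀ a, 0 ≤ w a) {p : ℝ} (hp : p ≠ 0) (c : ℝ) (f : α → ℝ) :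
    wnorm w p (c • f) = |c| * wnorm w p f := by
  have hsum : ∑ a, w a * |(c • f) a| ^ p = |c| ^ p * ∑ a, w a * |f a| ^ p := by
    rw [mul_sum]
    refine sum_congr rfl fun a _ => ?_
    rw [Pi.smul_apply, smul_eq_mul, abs_mul, Real.mul_rpow (abs_nonneg _) (abs_nonneg _)]
    ring
  rw [wnorm, wnorm, hsum, Real.mul_rpow (Real.rpow_nonneg (abs_nonneg _) _)
    (sum_mul_rpow_abs_nonneg hw p f), one_div, Real.rpow_rpow_inv (abs_nonneg c) hp]

lemma wnorm_inv_wnorm_smul_abs (hw : ∀ a, 0 < w a) {p : ℝ} (hp : p ≠ 0) {f : α → ℝ} (hf : f ≠ 0) :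
    wnorm w p ((wnorm w p f)⁻¹ • |f|) = 1 := by
  have hpos := wnorm_pos hw p hf
  rw [wnorm_smul (fun a => (hw a).le) hp, wnorm_abs, abs_of_pos (inv_pos.2 hpos),
    inv_mul_cancel₀ hpos.ne']

lemma wnorm_indicator_one (w : α → ℝ) {p : ℝ} (hp : p ≠ 0) (S : Set α) :
    wnorm w p (S.indicator 1) = (∑ a, w a * S.indicator 1 a) ^ (1 / p) := by
  have hpow (a : α) : |S.indicator (1 : α → ℝ) a| ^ p = S.indicator 1 a := by
    by_cases ha : a ∈ S <;> simp [ha, Real.zero_rpow hp]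
  simp only [wnorm, hpow]

lemma sum_mul_rpow_half_sq_eq_one (hw : ∀ a, 0 ≤ w a) {p : ℝ} (hp : p ≠ 0) {f : α → ℝ}
    (hf : 0 ≤ f) (hf1 : wnorm w p f = 1) : ∑ a, w a * (f a ^ (p / 2)) ^ 2 = 1 := by
  have hsq (a : α) : (f a ^ (p / 2)) ^ 2 = |f a| ^ p := by
    rw [abs_of_nonneg (hf a), ← Real.rpow_mul_natCast (hf a), Nat.cast_ofNat,
      div_mul_cancel₀ p two_ne_zero]
  simp only [hsq]
  exact (Real.rpow_left_inj (sum_mul_rpow_abs_nonneg hw p f) zero_le_one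
    (one_div_ne_zero hp)).1 (hf1.trans (Real.one_rpow _).symm)

lemma wnorm_le_of_forall_sum_mul_le (hw : ∀ a, 0 ≤ w a) {p q : ℝ} (hpq : p.HolderConjugate q)
    {g : α → ℝ} {c : ℝ} (hc : 0 ≤ c)
    (h : ∀ f : α → ℝ, ∑ a, w a * (f a * g a) ≤ wnorm w p f * c) :
    wnorm w q g ≤ c := by
  have hq := hpq.symm
  -- extremal in the Hölder inequality for `g`
  let f : α → ℝ := fun a => SignType.sign (g a) * |g a| ^ (q - 1)
  have hfg (a : α) : f a * g a = |g a| ^ q := by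
    calc f a * g a = |g a| ^ (q - 1) * |g a| ^ (1 : ℝ) := by
          rw [mul_right_comm, sign_mul_self, mul_comm, Real.rpow_one]
      _ = |g a| ^ q := by
          rw [← Real.rpow_add' (abs_nonneg _) (by simpa using hq.ne_zero), sub_add_cancel]
  have hf (a : α) : |f a| ^ p = |g a| ^ q := by
    rcases eq_or_ne (g a) 0 with ha | ha
    · simp [f, ha, Real.zero_rpow hpq.ne_zero, Real.zero_rpow hq.ne_zero]
    · have hsign : |(SignType.sign (g a) : ℝ)| = 1 := by
        rcases ha.lt_or_gt with ha | ha <;> simp [ha]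
      rw [abs_mul, hsign, one_mul, abs_of_nonneg (Real.rpow_nonneg (abs_nonneg _) _),
        ← Real.rpow_mul (abs_nonneg _), hq.sub_one_mul_conj]
  have hle := h f
  simp only [hfg, wnorm, hf] at hle
  rw [wnorm]
  rcases (sum_mul_rpow_abs_nonneg hw q g).eq_or_lt with hzero | hpos
  · rwa [← hzero, Real.zero_rpow hq.one_div_ne_zero]
  · rwa [one_div, ← hpq.one_sub_inv, Real.rpow_sub hpos, Real.rpow_one,
      div_le_iff₀' (Real.rpow_pos_of_pos hpos _), ← one_div]

lemma sum_mul_le_wnorm_mul_wnorm_of_normalized {β : Type*} [Fintype β] {w' : β → ℝ}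
    (hw : ∀ a, 0 < w a) (hw' : ∀ b, 0 < w' b) {D : α × β → ℝ} (hD : ∀ z, 0 ≤ D z)
    {p : ℝ} (hp : p ≠ 0)
    (h : ∀ (f : α → ℝ) (g : β → ℝ), 0 ≤ f → 0 ≤ g → wnorm w p f = 1 → wnorm w' p g = 1 →
      ∑ z, D z * (f z.1 * g z.2) ≤ 1) (f : α → ℝ) (g : β → ℝ) :
    ∑ z, D z * (f z.1 * g z.2) ≤ wnorm w p f * wnorm w' p g := by
  rcases eq_or_ne f 0 with rfl | hf
  · simpa using mul_nonneg (wnorm_nonneg (fun a => (hw a).le) p 0)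
      (wnorm_nonneg (fun b => (hw' b).le) p g)
  rcases eq_or_ne g 0 with rfl | hg
  · simpa using mul_nonneg (wnorm_nonneg (fun a => (hw a).le) p f)
      (wnorm_nonneg (fun b => (hw' b).le) p 0)
  have hfpos := wnorm_pos hw p hf
  have hgpos := wnorm_pos hw' p hg
  have hnormalized := h ((wnorm w p f)⁻¹ • |f|) ((wnorm w' p g)⁻¹ • |g|)
    (smul_nonneg (inv_nonneg.2 hfpos.le) (abs_nonneg f))
    (smul_nonneg (inv_nonneg.2 hgpos.le) (abs_nonneg g))
    (wnorm_inv_wnorm_smul_abs hw hp hf) (wnorm_inv_wnorm_smul_abs hw' hp hg)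
  calc ∑ z, D z * (f z.1 * g z.2) ≤ ∑ z, D z * (|f z.1| * |g z.2|) :=
        sum_le_sum fun z _ => mul_le_mul_of_nonneg_left
          ((le_abs_self _).trans_eq (abs_mul _ _)) (hD z)
    _ = wnorm w p f * wnorm w' p g * ∑ z, D z *
          (((wnorm w p f)⁻¹ • |f|) z.1 * ((wnorm w' p g)⁻¹ • |g|) z.2) := by
        rw [mul_sum]
        refine sum_congr rfl fun z _ => ?_
        simp only [Pi.smul_apply, Pi.abs_apply, smul_eq_mul]
        field_simp
    _ ≤ wnorm w p f * wnorm w' p g :=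
        mul_le_of_le_one_right (mul_nonneg hfpos.le hgpos.le) hnormalized

lemma le_sum_inv_mul_sum (hw : ∀ a, 0 ≤ w a) {f : α → ℝ} (hf : ∀ a, 0 ≤ f a) {a : α}
    (ha : w a ≠ 0) : f a ≤ (∑ b, (w b)⁻¹) * ∑ b, w b * f b := by
  have hinv : (w a)⁻¹ ≤ ∑ b, (w b)⁻¹ :=
    single_le_sum (f := fun b => (w b)⁻¹) (fun b _ => inv_nonneg.2 (hw b)) (mem_univ a)
  have hterm : w a * f a ≤ ∑ b, w b * f b :=
    single_le_sum (f := fun b => w b * f b) (fun b _ => mul_nonneg (hw b) (hf b)) (mem_univ a)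
  calc f a = (w a)⁻¹ * (w a * f a) := (inv_mul_cancel_left₀ ha _).symm
    _ ≤ _ := mul_le_mul hinv hterm (mul_nonneg (hw a) (hf a))
        (sum_nonneg fun b _ => inv_nonneg.2 (hw b))

lemma exists_le_one_and_exists_one_le_of_sum_mul_sq (hw : ∀ a, 0 < w a) (hw1 : ∑ a, w a = 1)
    {u : α → ℝ} (hu : ∀ a, 0 ≤ u a) (hu1 : ∑ a, w a * u a ^ 2 = 1) :
    (∃ a, u a ≤ 1) ∧ ∃ a, 1 ≤ u a := by
  have hne : (univ : Finset α).Nonempty := nonempty_of_sum_ne_zero (hw1 ▸ one_ne_zero)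
  constructor
  · obtain ⟨a, -, ha⟩ := exists_le_of_sum_le hne (hu1.trans hw1.symm).le
    exact ⟨a, (sq_le_one_iff₀ (hu a)).1 ((mul_le_iff_le_one_right (hw a)).1 ha)⟩
  · obtain ⟨a, -, ha⟩ := exists_le_of_sum_le hne (hw1.trans hu1.symm).le
    exact ⟨a, (one_le_sq_iff₀ (hu a)).1 ((le_mul_iff_one_le_right (hw a)).1 ha)⟩

end WeightedNorm

section Marginals

variable {X Y : Type*} [Fintype X] [Fintype Y] (D : X × Y → ℝ)

lemma sum_margX_mul (g : X → ℝ) : ∑ x, margX D x * g x = ∑ z, D z * g z.1 := by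
  simp only [margX, sum_mul, Fintype.sum_prod_type]

lemma sum_margY_mul (g : Y → ℝ) : ∑ y, margY D y * g y = ∑ z, D z * g z.2 := by
  simp only [margY, sum_mul, Fintype.sum_prod_type_right]

lemma sum_margX : ∑ x, margX D x = ∑ z, D z := by
  simp only [margX, Fintype.sum_prod_type]

variable {D}

lemma sum_margX_mul_mul_condOp (hDX : ∀ x, margX D x ≠ 0) (h : X → ℝ) (f : Y → ℝ) :
    ∑ x, margX D x * (h x * condOp D f x) = ∑ z, D z * (h z.1 * f z.2) := by
  rw [Fintype.sum_prod_type]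
  refine sum_congr rfl fun x _ => ?_
  rw [mul_left_comm, condOp, mul_div_cancel₀ _ (hDX x), mul_sum]
  exact sum_congr rfl fun y _ => mul_left_comm _ _ _

end Marginals

lemma abs_sub_le_walk_length_mul {V : Type*} {G : SimpleGraph V} {f : V → ℝ} {τ : ℝ}
    (h : ∀ a b, G.Adj a b → |f a - f b| ≤ τ) {a b : V} (walk : G.Walk a b) :
    |f a - f b| ≤ walk.length * τ := by
  induction walk with
  | nil => simp
  | @cons a b c hadj walk ih =>
    calc |f a - f c| ≤ |f a - f b| + |f b - f c| := abs_sub_le _ _ _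
      _ ≤ τ + walk.length * τ := add_le_add (h a b hadj) ih
      _ = (SimpleGraph.Walk.cons hadj walk).length * τ := by
        rw [SimpleGraph.Walk.length_cons]; push_cast; ring

lemma abs_sub_le_card_mul {V : Type*} [Fintype V] {G : SimpleGraph V} (hG : G.Preconnected)
    {f : V → ℝ} {τ : ℝ} (hτ : 0 ≤ τ) (h : ∀ a b, G.Adj a b → |f a - f b| ≤ τ) (a b : V) :
    |f a - f b| ≤ Fintype.card V * τ := by
  obtain ⟨path, hpath⟩ := hG.exists_isPath a b
  refine (abs_sub_le_walk_length_mul h path).trans ?_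
  gcongr
  exact hpath.length_lt.le

/-- The bipartite graph on `X ⊕ Y` whose edges are the pairs in the support of `D`; its
connectedness is the graph-theoretic form of non-degeneracy. -/
def supportGraph {X Y : Type*} (D : X × Y → ℝ) : SimpleGraph (X ⊕ Y) where
  Adj
    | .inl x, .inr y => D (x, y) ≠ 0
    | .inr y, .inl x => D (x, y) ≠ 0
    | _, _ => False
  symm := ⟨by rintro (x | y) (x' | y') h <;> exact h⟩
  loopless := ⟨by rintro (x | y) h <;> exact h⟩

lemma supportGraph_preconnected {X Y : Type*} [Fintype X] [Fintype Y] {D : X × Y → ℝ}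
    (hDX : ∀ x, margX D x ≠ 0) (hDY : ∀ y, margY D y ≠ 0) (hnd : ¬ Degenerate D) :
    (supportGraph D).Preconnected := by
  have hneighborX (x : X) : ∃ y, D (x, y) ≠ 0 := by
    obtain ⟨y, -, hy⟩ := exists_ne_zero_of_sum_ne_zero (hDX x)
    exact ⟨y, hy⟩
  have hneighborY (y : Y) : ∃ x, D (x, y) ≠ 0 := by
    obtain ⟨x, -, hx⟩ := exists_ne_zero_of_sum_ne_zero (hDY y)
    exact ⟨x, hx⟩
  have hadj {x : X} {y : Y} (hxy : D (x, y) ≠ 0) :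
      (supportGraph D).Reachable (.inl x) (.inr y) :=
    SimpleGraph.Adj.reachable (G := supportGraph D) hxy
  have hreachX (x₀ x : X) : (supportGraph D).Reachable (.inl x₀) (.inl x) := by
    by_contra hx
    obtain ⟨y₀, hy₀⟩ := hneighborX x₀
    obtain ⟨y, hy⟩ := hneighborX x
    refine hnd ⟨{x | (supportGraph D).Reachable (.inl x₀) (.inl x)},
      {y | (supportGraph D).Reachable (.inl x₀) (.inr y)}, ⟨x₀, .rfl⟩,
      (Set.ne_univ_iff_exists_notMem _).2 ⟨x, hx⟩, ⟨y₀, hadj hy₀⟩,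
      (Set.ne_univ_iff_exists_notMem _).2 ⟨y, fun hy' => hx (hy'.trans (hadj hy).symm)⟩, ?_⟩
    rintro x y (⟨hx, hy⟩ | ⟨hx, hy⟩) <;> by_contra hxy
    · exact hy (hx.trans (hadj hxy))
    · exact hx (hy.trans (hadj hxy).symm)
  have hreach (x₀ : X) : ∀ b, (supportGraph D).Reachable (.inl x₀) b
    | .inl x => hreachX x₀ x
    | .inr y => by
      obtain ⟨x, hx⟩ := hneighborY y
      exact (hreachX x₀ x).trans (hadj hx)
  rintro (x | y) b
  · exact hreach x b
  · obtain ⟨x, hx⟩ := hneighborY y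
    exact (hadj hx).symm.trans (hreach x b)

section Poincare

variable {X Y : Type*} [Fintype X] [Fintype Y] {D : X × Y → ℝ}

/-- A Poincaré-type inequality with constant `K`, for functions on the two factors with unit `L²`
norm: the deviation of `u v` from `1` is controlled by the disagreement of `u` and `v` along `D`. -/
def PoincareInequality (D : X × Y → ℝ) (K : ℝ) : Prop :=
  ∀ (u : X → ℝ) (v : Y → ℝ), (∀ x, 0 ≤ u x) →
    ∑ x, margX D x * u x ^ 2 = 1 → ∑ y, margY D y * v y ^ 2 = 1 →
    ∑ z, D z * (u z.1 * v z.2 - 1) ^ 2 ≤ K * ∑ z, D z * (u z.1 - v z.2) ^ 2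

lemma abs_sumElim_sub_one_le (hD1 : ∑ z, D z = 1) (hDX : ∀ x, 0 < margX D x)
    (hconn : (supportGraph D).Preconnected) {u : X → ℝ} {v : Y → ℝ} (hu : ∀ x, 0 ≤ u x)
    (hu1 : ∑ x, margX D x * u x ^ 2 = 1) {τ : ℝ} (hτ : 0 ≤ τ)
    (huv : ∀ x y, D (x, y) ≠ 0 → |u x - v y| ≤ τ) (a : X ⊕ Y) :
    |Sum.elim u v a - 1| ≤ Fintype.card (X ⊕ Y) * τ := by
  have hedge : ∀ a b, (supportGraph D).Adj a b → |Sum.elim u v a - Sum.elim u v b| ≤ τ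
    | .inl x, .inr y, hxy => huv x y hxy
    | .inr y, .inl x, hxy => by
      rw [abs_sub_comm]
      exact huv x y hxy
  obtain ⟨⟨x, hx⟩, ⟨x', hx'⟩⟩ :=
    exists_le_one_and_exists_one_le_of_sum_mul_sq hDX ((sum_margX D).trans hD1) hu hu1
  have hupper := abs_le.1 (abs_sub_le_card_mul hconn hτ hedge a (.inl x))
  have hlower := abs_le.1 (abs_sub_le_card_mul hconn hτ hedge a (.inl x'))
  simp only [Sum.elim_inl] at hupper hlower
  exact abs_le.2 ⟨by linarith, by linarith⟩

lemma mul_sub_one_sq_le {a b c : ℝ} (ha : (a - 1) ^ 2 ≤ c) (hb : (b - 1) ^ 2 ≤ c) :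
    (a * b - 1) ^ 2 ≤ 2 * c * (b ^ 2 + 1) := by
  calc (a * b - 1) ^ 2 = ((a - 1) * b + (b - 1)) ^ 2 := by ring
    _ ≤ 2 * (((a - 1) * b) ^ 2 + (b - 1) ^ 2) := add_sq_le
    _ ≤ 2 * (c * b ^ 2 + c) := by
      rw [mul_pow]
      gcongr
    _ = 2 * c * (b ^ 2 + 1) := by ring

lemma poincareInequality_of_preconnected (hD0 : ∀ z, 0 ≤ D z) (hD1 : ∑ z, D z = 1)
    (hDX : ∀ x, 0 < margX D x) (hconn : (supportGraph D).Preconnected) :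
    PoincareInequality D (4 * Fintype.card (X ⊕ Y) ^ 2 * ∑ z, (D z)⁻¹) := by
  intro u v hu hu1 hv1
  -- `0⁻¹ = 0`, so `C` only sums over the support of `D`
  set C := ∑ z, (D z)⁻¹
  set s := ∑ z, D z * (u z.1 - v z.2) ^ 2
  set n := (Fintype.card (X ⊕ Y) : ℝ)
  have hC : 0 ≤ C := sum_nonneg fun z _ => inv_nonneg.2 (hD0 z)
  have hs : 0 ≤ s := sum_nonneg fun z _ => mul_nonneg (hD0 z) (sq_nonneg _)
  have hedge (x : X) (y : Y) (hxy : D (x, y) ≠ 0) : |u x - v y| ≤ √(C * s) :=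
    Real.abs_le_sqrt
      (le_sum_inv_mul_sum hD0 (f := fun z => (u z.1 - v z.2) ^ 2) (fun z => sq_nonneg _) hxy)
  have hclose (a : X ⊕ Y) : (Sum.elim u v a - 1) ^ 2 ≤ n ^ 2 * (C * s) := by
    rw [← Real.sq_sqrt (mul_nonneg hC hs), ← mul_pow]
    exact sq_le_sq.2 ((abs_sumElim_sub_one_le hD1 hDX hconn hu hu1 (Real.sqrt_nonneg _) hedge
      a).trans (le_abs_self _))
  have hpointwise (z : X × Y) :
      (u z.1 * v z.2 - 1) ^ 2 ≤ 2 * (n ^ 2 * (C * s)) * (v z.2 ^ 2 + 1) :=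
    mul_sub_one_sq_le (hclose (.inl z.1)) (hclose (.inr z.2))
  calc ∑ z, D z * (u z.1 * v z.2 - 1) ^ 2
      ≤ ∑ z, D z * (2 * (n ^ 2 * (C * s)) * (v z.2 ^ 2 + 1)) :=
        sum_le_sum fun z _ => mul_le_mul_of_nonneg_left (hpointwise z) (hD0 z)
    _ = ∑ z, 2 * (n ^ 2 * (C * s)) * (D z * v z.2 ^ 2 + D z) :=
        sum_congr rfl fun z _ => by ring
    _ = 2 * (n ^ 2 * (C * s)) * (∑ z, D z * v z.2 ^ 2 + ∑ z, D z) := by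
        rw [← mul_sum, sum_add_distrib]
    _ = 4 * n ^ 2 * C * s := by
        rw [← sum_margY_mul D fun y => v y ^ 2, hv1, hD1]
        ring

end Poincare

section Hypercontractivity

lemma rpow_one_add_le {t ε : ℝ} (ht : 0 ≤ t) (hε0 : 0 ≤ ε) (hε1 : ε ≤ 1) :
    t ^ (1 + ε) ≤ t + ε * (t - 1) + ε * (t - 1) ^ 2 := by
  have hbernoulli := rpow_one_add_le_one_add_mul_self (s := t - 1) (by linarith) hε0 hε1
  rw [add_sub_cancel] at hbernoulli
  calc t ^ (1 + ε) = t * t ^ ε := by rw [Real.rpow_add' ht (by linarith), Real.rpow_one]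
    _ ≤ t * (1 + ε * (t - 1)) := mul_le_mul_of_nonneg_left hbernoulli ht
    _ = t + ε * (t - 1) + ε * (t - 1) ^ 2 := by ring

lemma holderConjugate_two_sub {δ : ℝ} (hδ : δ < 1) :
    (2 - δ).HolderConjugate (2 + δ / (1 - δ)) := by
  have hδ' : 1 - δ ≠ 0 := by linarith
  rw [Real.holderConjugate_iff_eq_conjExponent (by linarith),
    show 2 - δ - 1 = 1 - δ by ring]
  field_simp
  ring

variable {X Y : Type*} [Fintype X] [Fintype Y] {D : X × Y → ℝ}

lemma PoincareInequality.sum_mul_rpow_le_one {K : ℝ} (hK : PoincareInequality D K)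
    (hD0 : ∀ z, 0 ≤ D z) (hD1 : ∑ z, D z = 1) {ε : ℝ} (hε0 : 0 ≤ ε) (hε1 : ε ≤ 1)
    (hεK : 2 * ε * K ≤ 1 + ε) {u : X → ℝ} {v : Y → ℝ} (hu : ∀ x, 0 ≤ u x) (hv : ∀ y, 0 ≤ v y)
    (hu1 : ∑ x, margX D x * u x ^ 2 = 1) (hv1 : ∑ y, margY D y * v y ^ 2 = 1) :
    ∑ z, D z * (u z.1 * v z.2) ^ (1 + ε) ≤ 1 := by
  have hpoincare := mul_le_mul_of_nonneg_left (hK u v hu hu1 hv1) hε0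
  rw [sum_margX_mul D fun x => u x ^ 2] at hu1
  rw [sum_margY_mul D fun y => v y ^ 2] at hv1
  set s := ∑ z, D z * (u z.1 - v z.2) ^ 2 with hs_def
  have hs : 0 ≤ s := sum_nonneg fun z _ => mul_nonneg (hD0 z) (sq_nonneg _)
  have hmean : ∑ z, D z * (u z.1 * v z.2) = 1 - s / 2 := by
    have hexpand : s = ∑ z, D z * u z.1 ^ 2 + ∑ z, D z * v z.2 ^ 2
        - 2 * ∑ z, D z * (u z.1 * v z.2) := by
      rw [hs_def, mul_sum, ← sum_add_distrib, ← sum_sub_distrib]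
      exact sum_congr rfl fun z _ => by ring
    linarith
  calc ∑ z, D z * (u z.1 * v z.2) ^ (1 + ε)
      ≤ ∑ z, D z * (u z.1 * v z.2 + ε * (u z.1 * v z.2 - 1) + ε * (u z.1 * v z.2 - 1) ^ 2) :=
        sum_le_sum fun z _ => mul_le_mul_of_nonneg_left
          (rpow_one_add_le (mul_nonneg (hu _) (hv _)) hε0 hε1) (hD0 z)
    _ = (1 + ε) * ∑ z, D z * (u z.1 * v z.2) - ε * ∑ z, D z
          + ε * ∑ z, D z * (u z.1 * v z.2 - 1) ^ 2 := by
        rw [mul_sum, mul_sum, mul_sum, ← sum_sub_distrib, ← sum_add_distrib]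
        exact sum_congr rfl fun z _ => by ring
    _ ≤ (1 + ε) * (1 - s / 2) - ε + ε * (K * s) := by
        rw [hmean, hD1]
        linarith
    _ ≤ 1 := by linarith [mul_le_mul_of_nonneg_right hεK hs]

lemma PoincareInequality.sum_mul_le_one {K : ℝ} (hK : PoincareInequality D K)
    (hD0 : ∀ z, 0 ≤ D z) (hD1 : ∑ z, D z = 1) {δ : ℝ} (hδ0 : 0 ≤ δ) (hδ1 : δ ≤ 1)
    (hδK : δ * K ≤ 1) {f : X → ℝ} {g : Y → ℝ} (hf : 0 ≤ f) (hg : 0 ≤ g)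
    (hf1 : wnorm (margX D) (2 - δ) f = 1) (hg1 : wnorm (margY D) (2 - δ) g = 1) :
    ∑ z, D z * (f z.1 * g z.2) ≤ 1 := by
  have hp : 0 < 2 - δ := by linarith
  have hexponent : 1 + δ / (2 - δ) = ((2 - δ) / 2)⁻¹ := by
    field_simp
    ring
  have hεK : 2 * (δ / (2 - δ)) * K ≤ 1 + δ / (2 - δ) := by
    calc 2 * (δ / (2 - δ)) * K = δ * K * ((2 - δ) / 2)⁻¹ := by field_simp
      _ ≤ ((2 - δ) / 2)⁻¹ := mul_le_of_le_one_left (by positivity) hδK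
      _ = 1 + δ / (2 - δ) := hexponent.symm
  have hle := hK.sum_mul_rpow_le_one hD0 hD1 (div_nonneg hδ0 hp.le)
    ((div_le_one hp).2 (by linarith)) hεK
    (fun x => Real.rpow_nonneg (hf x) _) (fun y => Real.rpow_nonneg (hg y) _)
    (sum_mul_rpow_half_sq_eq_one (fun x => sum_nonneg fun y _ => hD0 (x, y)) hp.ne' hf hf1)
    (sum_mul_rpow_half_sq_eq_one (fun y => sum_nonneg fun x _ => hD0 (x, y)) hp.ne' hg hg1)
  have hpow (z : X × Y) :
      (f z.1 ^ ((2 - δ) / 2) * g z.2 ^ ((2 - δ) / 2)) ^ (1 + δ / (2 - δ)) = f z.1 * g z.2 := by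
    rw [← Real.mul_rpow (hf _) (hg _), hexponent,
      Real.rpow_rpow_inv (mul_nonneg (hf _) (hg _)) (by positivity)]
  simpa only [hpow] using hle

theorem PoincareInequality.hypercontractive {K : ℝ} (hK : PoincareInequality D K)
    (hD0 : ∀ z, 0 ≤ D z) (hD1 : ∑ z, D z = 1) (hDX : ∀ x, 0 < margX D x)
    (hDY : ∀ y, 0 < margY D y) {δ : ℝ} (hδ0 : 0 ≤ δ) (hδ1 : δ < 1) (hδK : δ * K ≤ 1) :
    Hypercontractive D δ := by
  intro f
  refine wnorm_le_of_forall_sum_mul_le (fun x => (hDX x).le) (holderConjugate_two_sub hδ1)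
    (wnorm_nonneg (fun y => (hDY y).le) _ f) fun h => ?_
  rw [sum_margX_mul_mul_condOp fun x => (hDX x).ne']
  exact sum_mul_le_wnorm_mul_wnorm_of_normalized hDX hDY hD0 (by linarith)
    (fun _ _ => hK.sum_mul_le_one hD0 hD1 hδ0 hδ1.le hδK) h f

end Hypercontractivity

lemma mul_indicator_eq_of_forall_eq_zero {X Y : Type*} {D : X × Y → ℝ} {A : Set X} {B : Set Y}
    (hAB : ∀ x y, (x ∈ A ∧ y ∉ B) ∨ (x ∉ A ∧ y ∈ B) → D (x, y) = 0) (z : X × Y) :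
    D z * B.indicator 1 z.2 = D z * A.indicator 1 z.1 := by
  obtain ⟨x, y⟩ := z
  by_cases hx : x ∈ A <;> by_cases hy : y ∈ B <;> simp [hx, hy, hAB x y]

theorem Degenerate.not_hypercontractive {X Y : Type*} [Fintype X] [Fintype Y] {D : X × Y → ℝ}
    (hdeg : Degenerate D) (hD1 : ∑ z, D z = 1) (hDX : ∀ x, 0 < margX D x) {δ : ℝ} (hδ0 : 0 < δ)
    (hδ1 : δ < 1) : ¬ Hypercontractive D δ := by
  intro hyper
  obtain ⟨A, B, ⟨a, ha⟩, hA, -, -, hAB⟩ := hdeg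
  obtain ⟨a', ha'⟩ := (Set.ne_univ_iff_exists_notMem A).1 hA
  set m := ∑ x, margX D x * A.indicator 1 x with hm
  have hmassB : ∑ y, margY D y * B.indicator 1 y = m := by
    rw [hm, sum_margX_mul, sum_margY_mul]
    exact sum_congr rfl fun z _ => mul_indicator_eq_of_forall_eq_zero hAB z
  have hcondOp : condOp D (B.indicator 1) = A.indicator 1 := by
    ext x
    rw [condOp, div_eq_iff (hDX x).ne', mul_comm, margX, sum_mul]
    exact sum_congr rfl fun y _ => mul_indicator_eq_of_forall_eq_zero hAB (x, y)
  have hm0 : 0 < m :=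
    sum_pos' (fun x _ => mul_nonneg (hDX x).le (Set.indicator_nonneg (fun _ _ => zero_le_one) x))
      ⟨a, mem_univ a, by simp [ha, hDX]⟩
  have hm1 : m < 1 := by
    rw [← hD1, ← sum_margX]
    exact sum_lt_sum (fun x _ => mul_le_of_le_one_right (hDX x).le
      (Set.indicator_le_self' (fun _ _ => zero_le_one) x)) ⟨a', mem_univ a', by simp [ha', hDX]⟩
  have hexp : 2 - δ < 2 + δ / (1 - δ) := by
    have : 0 < δ / (1 - δ) := div_pos hδ0 (by linarith)
    linarith
  have hnorm := hyper (B.indicator 1)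
  rw [hcondOp, wnorm_indicator_one _ (by linarith), wnorm_indicator_one _ (by linarith),
    hmassB, ← hm] at hnorm
  exact hnorm.not_gt (Real.rpow_lt_rpow_of_exponent_gt hm0 hm1
    (one_div_lt_one_div_of_lt (by linarith) hexp))

theorem stmt6 {X Y : Type*} [Fintype X] [Fintype Y] [Nonempty X] [Nonempty Y]
    (D : X × Y → ℝ) (hD0 : ∀ p, 0 ≤ D p) (hD1 : ∑ p, D p = 1)
    (hDX : ∀ x, 0 < margX D x) (hDY : ∀ y, 0 < margY D y) :
    ¬ Degenerate D ↔ ∃ δ : ℝ, 0 < δ ∧ δ < 1 ∧ Hypercontractive D δ := by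
  constructor
  · intro hnd
    have hconn := supportGraph_preconnected (fun x => (hDX x).ne') (fun y => (hDY y).ne') hnd
    have hpoincare := poincareInequality_of_preconnected hD0 hD1 hDX hconn
    set K := 4 * (Fintype.card (X ⊕ Y) : ℝ) ^ 2 * ∑ z, (D z)⁻¹
    have hK : 0 ≤ K :=
      mul_nonneg (by positivity) (sum_nonneg fun z _ => inv_nonneg.2 (hD0 z))
    have hδ1 : 1 / (K + 2) < 1 := (div_lt_one (by linarith)).2 (by linarith)
    have hδK : 1 / (K + 2) * K ≤ 1 := by
      rw [one_div_mul_eq_div]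
      exact div_le_one_of_le₀ (by linarith) (by linarith)
    exact ⟨1 / (K + 2), by positivity, hδ1,
      hpoincare.hypercontractive hD0 hD1 hDX hDY (by positivity) hδ1 hδK⟩
  · rintro ⟨δ, hδ0, hδ1, hyper⟩ hdeg
    exact hdeg.not_hypercontractive hD1 hDX hδ0 hδ1 hyper
end

section
/- Two-point inequality: let 0 < ε < 1/2, p = 2 − 2ε, and q = (2 − 2ε)/(1 − 2ε). For every f : Bool → ℝ, define (T f)(x) = (1 − ε)·f(x) + ε·f(¬x). Then ((|T f(false)|^q + |T f(true)|^q)/2)^(1/q) ≤ ((|f(false)|^p + |f(true)|^p)/2)^(1/p). (Equivalently, δ(D_{1,ε}) ≥ 2ε, where D_{1,ε} is the distribution on Bool × Bool giving probability (1−ε)/2 to each pair with equal coordinates and ε/2 to each pair with distinct coordinates.) -/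
/-!
Write a function on `Bool` as `a + b·χ`, with `χ` the nontrivial character; the noise operator
multiplies `b` by `1 - 2ε`. For `1 ≤ p ≤ 2` the `L^p` norm dominates the quadratic form
`√(a² + (p - 1) b²)`. Applying this to `f` with exponent `p` and to a test function `g` with the
exponent `r` dual to `q`, the Cauchy–Schwarz inequality bounds the mean of `T f * g` by
`‖f‖_p ‖g‖_r` as soon as `(1 - 2ε)² ≤ (p - 1)(r - 1)`, and `L^q`–`L^r` duality concludes.
-/

open scoped BigOperators

section RpowInequalities

variable {p x : ℝ}

lemma two_le_one_add_rpow_add_one_sub_rpow {r : ℝ} (hr : r ≤ 0) (hx : |x| < 1) :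
    2 ≤ (1 + x) ^ r + (1 - x) ^ r := by
  obtain ⟨hx₁, hx₂⟩ := abs_lt.mp hx
  have h_add : 0 < 1 + x := by linarith
  have h_sub : 0 < 1 - x := by linarith
  have h_prod : 1 ≤ (1 + x) ^ r * (1 - x) ^ r := by
    rw [← Real.mul_rpow h_add.le h_sub.le]
    exact Real.one_le_rpow_of_pos_of_le_one_of_nonpos (mul_pos h_add h_sub)
      (by linarith [sq_nonneg x]) hr
  have h_add_rpow := Real.rpow_pos_of_pos h_add r
  have h_sub_rpow := Real.rpow_pos_of_pos h_sub r
  nlinarith [sq_nonneg ((1 + x) ^ r - (1 - x) ^ r)]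

lemma hasDerivAt_one_add_rpow_add_mul_one_sub_rpow (p c : ℝ) (hx : |x| < 1) :
    HasDerivAt (fun y ↦ (1 + y) ^ p + c * (1 - y) ^ p)
      (p * ((1 + x) ^ (p - 1) - c * (1 - x) ^ (p - 1))) x := by
  obtain ⟨hx₁, hx₂⟩ := abs_lt.mp hx
  have h_add := ((hasDerivAt_id' x).const_add 1).rpow_const (p := p) (.inl (by linarith))
  have h_sub := ((hasDerivAt_id' x).const_sub 1).rpow_const (p := p) (.inl (by linarith))
  exact (h_add.add (h_sub.const_mul c)).congr_deriv (by ring)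

lemma convexOn_one_add_rpow_add_one_sub_rpow_sub_sq (hp₁ : 1 ≤ p) (hp₂ : p ≤ 2) :
    ConvexOn ℝ (Set.Icc (-1) 1)
      (fun x ↦ (1 + x) ^ p + (1 - x) ^ p - p * (p - 1) * x ^ 2) := by
  have h_abs {x : ℝ} (hx : x ∈ interior (Set.Icc (-1 : ℝ) 1)) : |x| < 1 := by
    rw [interior_Icc] at hx
    exact abs_lt.mpr hx
  refine convexOn_of_hasDerivWithinAt2_nonneg (convex_Icc _ _)
    (f' := fun x ↦ p * ((1 + x) ^ (p - 1) + -1 * (1 - x) ^ (p - 1)) - p * (p - 1) * (2 * x))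
    (f'' := fun x ↦ p * (p - 1) * ((1 + x) ^ (p - 2) + (1 - x) ^ (p - 2) - 2)) ?_ ?_ ?_ ?_
  · have hp₀ : 0 ≤ p := by linarith
    fun_prop (disch := assumption)
  · intro x hx
    have h_rpow := hasDerivAt_one_add_rpow_add_mul_one_sub_rpow p 1 (h_abs hx)
    have h_sq := (hasDerivAt_pow 2 x).const_mul (p * (p - 1))
    simp only [one_mul] at h_rpow
    exact ((h_rpow.sub h_sq).congr_deriv (by push_cast; ring)).hasDerivWithinAt
  · intro x hx
    have h_rpow :=
      (hasDerivAt_one_add_rpow_add_mul_one_sub_rpow (p - 1) (-1) (h_abs hx)).const_mul p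
    have h_linear := ((hasDerivAt_id' x).const_mul 2).const_mul (p * (p - 1))
    exact ((h_rpow.sub h_linear).congr_deriv (by ring_nf)).hasDerivWithinAt
  · intro x hx
    exact mul_nonneg (mul_nonneg (by linarith) (by linarith))
      (sub_nonneg.mpr (two_le_one_add_rpow_add_one_sub_rpow (by linarith) (h_abs hx)))

lemma two_add_mul_sq_le_one_add_rpow_add_one_sub_rpow (hp₁ : 1 ≤ p) (hp₂ : p ≤ 2) (hx : |x| ≤ 1) :
    2 + p * (p - 1) * x ^ 2 ≤ (1 + x) ^ p + (1 - x) ^ p := by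
  have hx_mem : x ∈ Set.Icc (-1 : ℝ) 1 := abs_le.mp hx
  have hx_neg_mem : -x ∈ Set.Icc (-1 : ℝ) 1 := abs_le.mp (by rwa [abs_neg])
  have h_midpoint := (convexOn_one_add_rpow_add_one_sub_rpow_sub_sq hp₁ hp₂).2 hx_mem hx_neg_mem
    one_half_pos.le one_half_pos.le (add_halves 1)
  simp only [smul_eq_mul, mul_neg, add_neg_cancel, ← sub_eq_add_neg, sub_neg_eq_add, neg_sq,
    add_zero, sub_zero, Real.one_rpow] at h_midpoint
  linarith

lemma one_add_mul_sq_rpow_le_one_add_rpow_add_one_sub_rpow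
    (hp₁ : 1 ≤ p) (hp₂ : p ≤ 2) (hx : |x| ≤ 1) :
    (1 + (p - 1) * x ^ 2) ^ (p / 2) ≤ ((1 + x) ^ p + (1 - x) ^ p) / 2 := by
  have hs : 0 ≤ (p - 1) * x ^ 2 := mul_nonneg (by linarith) (sq_nonneg x)
  calc (1 + (p - 1) * x ^ 2) ^ (p / 2)
      ≤ 1 + p / 2 * ((p - 1) * x ^ 2) :=
        rpow_one_add_le_one_add_mul_self (by linarith) (by linarith) (by linarith)
    _ = (2 + p * (p - 1) * x ^ 2) / 2 := by ring
    _ ≤ ((1 + x) ^ p + (1 - x) ^ p) / 2 := by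
        exact div_le_div_of_nonneg_right
          (two_add_mul_sq_le_one_add_rpow_add_one_sub_rpow hp₁ hp₂ hx) zero_le_two

lemma sq_add_mul_sq_rpow_le_of_abs_le (hp₁ : 1 ≤ p) (hp₂ : p ≤ 2) {a b : ℝ} (hab : |b| ≤ |a|) :
    (a ^ 2 + (p - 1) * b ^ 2) ^ (p / 2) ≤ (|a + b| ^ p + |a - b| ^ p) / 2 := by
  rcases eq_or_ne a 0 with rfl | ha
  · obtain rfl : b = 0 := by simpa using hab
    simp [Real.zero_rpow (by linarith : p ≠ 0), Real.zero_rpow (by linarith : p / 2 ≠ 0)]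
  obtain ⟨x, rfl⟩ : ∃ x, b = a * x := ⟨b / a, by field_simp⟩
  have hx : |x| ≤ 1 := by
    rwa [abs_mul, mul_le_iff_le_one_right (abs_pos.mpr ha)] at hab
  obtain ⟨hx₁, hx₂⟩ := abs_le.mp hx
  have h_add : |a + a * x| ^ p = |a| ^ p * (1 + x) ^ p := by
    rw [← mul_one_add, abs_mul, abs_of_nonneg (by linarith : 0 ≤ 1 + x),
      Real.mul_rpow (abs_nonneg a) (by linarith)]
  have h_sub : |a - a * x| ^ p = |a| ^ p * (1 - x) ^ p := by
    rw [← mul_one_sub, abs_mul, abs_of_nonneg (by linarith : 0 ≤ 1 - x),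
      Real.mul_rpow (abs_nonneg a) (by linarith)]
  have h_nonneg : 0 ≤ 1 + (p - 1) * x ^ 2 :=
    add_nonneg zero_le_one (mul_nonneg (by linarith) (sq_nonneg x))
  have h_sq : (a ^ 2 + (p - 1) * (a * x) ^ 2) ^ (p / 2) =
      |a| ^ p * (1 + (p - 1) * x ^ 2) ^ (p / 2) := by
    rw [show a ^ 2 + (p - 1) * (a * x) ^ 2 = |a| ^ 2 * (1 + (p - 1) * x ^ 2) by
        rw [sq_abs]; ring,
      Real.mul_rpow (by positivity) h_nonneg, ← Real.rpow_natCast_mul (abs_nonneg a),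
      Nat.cast_ofNat, mul_div_cancel₀ p two_ne_zero]
  rw [h_add, h_sub, h_sq, ← mul_add, mul_div_assoc]
  gcongr
  exact one_add_mul_sq_rpow_le_one_add_rpow_add_one_sub_rpow hp₁ hp₂ hx

lemma sq_add_mul_sq_rpow_le_abs_add_rpow_add_abs_sub_rpow
    (hp₁ : 1 ≤ p) (hp₂ : p ≤ 2) (a b : ℝ) :
    (a ^ 2 + (p - 1) * b ^ 2) ^ (p / 2) ≤ (|a + b| ^ p + |a - b| ^ p) / 2 := by
  rcases le_total |b| |a| with hba | hab
  · exact sq_add_mul_sq_rpow_le_of_abs_le hp₁ hp₂ hba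
  · have h_nonneg : 0 ≤ a ^ 2 + (p - 1) * b ^ 2 :=
      add_nonneg (sq_nonneg a) (mul_nonneg (by linarith) (sq_nonneg b))
    have h_swap : a ^ 2 + (p - 1) * b ^ 2 ≤ b ^ 2 + (p - 1) * a ^ 2 := by
      nlinarith [sq_le_sq.mpr hab]
    calc (a ^ 2 + (p - 1) * b ^ 2) ^ (p / 2)
        ≤ (b ^ 2 + (p - 1) * a ^ 2) ^ (p / 2) :=
          Real.rpow_le_rpow h_nonneg h_swap (by linarith)
      _ ≤ (|a + b| ^ p + |a - b| ^ p) / 2 := by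
          simpa only [add_comm b a, abs_sub_comm b a] using
            sq_add_mul_sq_rpow_le_of_abs_le hp₁ hp₂ hab

end RpowInequalities

lemma mul_add_mul_le_sqrt_mul_sqrt {ρ σ τ : ℝ} (hσ : 0 ≤ σ) (hτ : 0 ≤ τ) (hρ : ρ ^ 2 ≤ σ * τ)
    (a b c d : ℝ) :
    a * c + ρ * (b * d) ≤ √(a ^ 2 + σ * b ^ 2) * √(c ^ 2 + τ * d ^ 2) := by
  have h_noise : ρ * (b * d) ≤ √σ * |b| * (√τ * |d|) :=
    calc ρ * (b * d) ≤ |ρ| * (|b| * |d|) := by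
          rw [← abs_mul, ← abs_mul]
          exact le_abs_self _
      _ ≤ √(σ * τ) * (|b| * |d|) := by
          gcongr
          exact Real.abs_le_sqrt hρ
      _ = √σ * |b| * (√τ * |d|) := by
          rw [Real.sqrt_mul hσ]
          ring
  have h_cauchy_schwarz := Real.sum_mul_le_sqrt_mul_sqrt Finset.univ
    ![a, √σ * |b|] ![c, √τ * |d|]
  simp only [Fin.sum_univ_two, Matrix.cons_val_zero, Matrix.cons_val_one, mul_pow,
    Real.sq_sqrt hσ, Real.sq_sqrt hτ, sq_abs] at h_cauchy_schwarz
  linarith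

/-- The `L^p` norm of a real function on a finite type with respect to the uniform probability
measure, for a real exponent `p > 0`. -/
noncomputable def uniformLpNorm {ι : Type*} [Fintype ι] (p : ℝ) (f : ι → ℝ) : ℝ :=
  (𝔼 i, |f i| ^ p) ^ (1 / p)

section Duality

variable {ι : Type*} [Fintype ι]

lemma uniformLpNorm_nonneg (p : ℝ) (f : ι → ℝ) : 0 ≤ uniformLpNorm p f := by
  unfold uniformLpNorm
  positivity

lemma mul_mul_abs_rpow_sub_two {q : ℝ} (hq : q ≠ 0) (y : ℝ) :
    y * (y * |y| ^ (q - 2)) = |y| ^ q := by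
  rcases eq_or_ne y 0 with rfl | hy
  · simp [Real.zero_rpow hq]
  · rw [← mul_assoc, ← pow_two, ← sq_abs, ← Real.rpow_natCast, ← Real.rpow_add (abs_pos.mpr hy)]
    congr 1
    push_cast
    ring

lemma abs_mul_abs_rpow_sub_two_rpow {p q : ℝ} (hpq : p.HolderConjugate q) (y : ℝ) :
    |y * |y| ^ (q - 2)| ^ p = |y| ^ q := by
  rcases eq_or_ne y 0 with rfl | hy
  · simp [Real.zero_rpow hpq.ne_zero, Real.zero_rpow hpq.symm.ne_zero]
  · have h_abs : |y * |y| ^ (q - 2)| = |y| ^ (q - 1) := by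
      rw [abs_mul, Real.abs_rpow_of_nonneg (abs_nonneg y), abs_abs, mul_comm,
        ← Real.rpow_add_one (abs_pos.mpr hy).ne']
      congr 1
      ring
    rw [h_abs, ← Real.rpow_mul (abs_nonneg y), hpq.symm.sub_one_mul_conj]

lemma uniformLpNorm_le_of_forall_expect_mul_le {p q C : ℝ} (hpq : p.HolderConjugate q)
    (hC : 0 ≤ C) {f : ι → ℝ} (h : ∀ g : ι → ℝ, 𝔼 i, f i * g i ≤ C * uniformLpNorm p g) :
    uniformLpNorm q f ≤ C := by
  set S : ℝ := 𝔼 i, |f i| ^ q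
  have hS : 0 ≤ S := Finset.expect_nonneg fun i _ ↦ by positivity
  have h_extremal : S ≤ C * S ^ (1 / p) := by
    simpa only [uniformLpNorm, mul_mul_abs_rpow_sub_two hpq.symm.ne_zero,
      abs_mul_abs_rpow_sub_two_rpow hpq] using h fun i ↦ f i * |f i| ^ (q - 2)
  change S ^ (1 / q) ≤ C
  rcases hS.eq_or_lt with hS₀ | hS_pos
  · rwa [← hS₀, Real.zero_rpow hpq.symm.one_div_ne_zero]
  · refine le_of_mul_le_mul_right ?_ (Real.rpow_pos_of_pos hS_pos (1 / p))
    rwa [← Real.rpow_add hS_pos, hpq.symm.one_div_add_one_div, one_div_one, Real.rpow_one]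

end Duality

/-- The noise operator on functions on `Bool` flipping the argument with probability `ε`, that is,
the conditional-expectation operator of the distribution `D_{1,ε}`. -/
def boolNoise (ε : ℝ) (f : Bool → ℝ) (x : Bool) : ℝ :=
  (1 - ε) * f x + ε * f (!x)

section Bool

variable {p : ℝ}

lemma expect_bool (f : Bool → ℝ) : 𝔼 x, f x = (f false + f true) / 2 := by
  rw [Fintype.expect_eq_sum_div_card, Fintype.sum_bool, Fintype.card_bool, add_comm, Nat.cast_ofNat]

lemma sqrt_expect_sq_add_mul_sq_le_uniformLpNorm (hp₁ : 1 ≤ p) (hp₂ : p ≤ 2) (f : Bool → ℝ) :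
    √((𝔼 x, f x) ^ 2 + (p - 1) * ((f false - f true) / 2) ^ 2) ≤ uniformLpNorm p f := by
  set a := 𝔼 x, f x with ha
  set b := (f false - f true) / 2 with hb
  have h_add : a + b = f false := by rw [ha, hb, expect_bool]; ring
  have h_sub : a - b = f true := by rw [ha, hb, expect_bool]; ring
  have h_nonneg : 0 ≤ a ^ 2 + (p - 1) * b ^ 2 :=
    add_nonneg (sq_nonneg a) (mul_nonneg (by linarith) (sq_nonneg b))
  calc √(a ^ 2 + (p - 1) * b ^ 2)
      = ((a ^ 2 + (p - 1) * b ^ 2) ^ (p / 2)) ^ (1 / p) := by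
        rw [Real.sqrt_eq_rpow, ← Real.rpow_mul h_nonneg]
        congr 1
        field_simp
    _ ≤ ((|a + b| ^ p + |a - b| ^ p) / 2) ^ (1 / p) := by
        gcongr
        exact sq_add_mul_sq_rpow_le_abs_add_rpow_add_abs_sub_rpow hp₁ hp₂ a b
    _ = uniformLpNorm p f := by
        rw [h_add, h_sub, uniformLpNorm, expect_bool]

lemma expect_boolNoise_mul (ε : ℝ) (f g : Bool → ℝ) :
    𝔼 x, boolNoise ε f x * g x =
      (𝔼 x, f x) * (𝔼 x, g x) +
        (1 - 2 * ε) * ((f false - f true) / 2 * ((g false - g true) / 2)) := by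
  simp only [expect_bool, boolNoise, Bool.not_false, Bool.not_true]
  ring

lemma expect_boolNoise_mul_le {r ε : ℝ} (hp₁ : 1 ≤ p) (hp₂ : p ≤ 2) (hr₁ : 1 ≤ r) (hr₂ : r ≤ 2)
    (hε : (1 - 2 * ε) ^ 2 ≤ (p - 1) * (r - 1)) (f g : Bool → ℝ) :
    𝔼 x, boolNoise ε f x * g x ≤ uniformLpNorm p f * uniformLpNorm r g := by
  rw [expect_boolNoise_mul]
  have hp : 0 ≤ p - 1 := sub_nonneg.mpr hp₁
  have hr : 0 ≤ r - 1 := sub_nonneg.mpr hr₁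
  refine (mul_add_mul_le_sqrt_mul_sqrt hp hr hε _ _ _ _).trans ?_
  gcongr
  · exact uniformLpNorm_nonneg p f
  · exact sqrt_expect_sq_add_mul_sq_le_uniformLpNorm hp₁ hp₂ f
  · exact sqrt_expect_sq_add_mul_sq_le_uniformLpNorm hr₁ hr₂ g

end Bool

theorem stmt11_general {p q ε : ℝ} (hp₂ : p ≤ 2) (hq : 2 ≤ q)
    (hε : (1 - 2 * ε) ^ 2 * (q - 1) ≤ p - 1) (f : Bool → ℝ) :
    uniformLpNorm q (boolNoise ε f) ≤ uniformLpNorm p f := by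
  have hp₁ : 1 ≤ p := by
    linarith [mul_nonneg (sq_nonneg (1 - 2 * ε)) (by linarith : 0 ≤ q - 1)]
  have hqr : q.HolderConjugate q.conjExponent := .conjExponent (by linarith)
  set r := q.conjExponent
  have hr₁ : 1 < r := hqr.symm.lt
  have h_dual : (q - 1) * (r - 1) = 1 := by linarith [hqr.mul_eq_add]
  have hr₂ : r ≤ 2 := by nlinarith
  have hεr : (1 - 2 * ε) ^ 2 ≤ (p - 1) * (r - 1) := by
    calc (1 - 2 * ε) ^ 2 = (1 - 2 * ε) ^ 2 * (q - 1) * (r - 1) := by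
          rw [mul_assoc, h_dual, mul_one]
      _ ≤ (p - 1) * (r - 1) := mul_le_mul_of_nonneg_right hε (by linarith)
  exact uniformLpNorm_le_of_forall_expect_mul_le hqr.symm (uniformLpNorm_nonneg p f)
    (expect_boolNoise_mul_le hp₁ hp₂ hr₁.le hr₂ hεr f)

/-- Two-point inequality (`δ(D_{1,ε}) ≥ 2ε`): the noise operator on `Bool` is
`(p, q)`-hypercontractive for `p = 2 - 2ε` and `q = (2 - 2ε)/(1 - 2ε)`. -/
theorem stmt11 (ε : ℝ) (hε0 : 0 < ε) (hε1 : ε < 1 / 2)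
    (p q : ℝ) (hp : p = 2 - 2 * ε) (hq : q = (2 - 2 * ε) / (1 - 2 * ε))
    (f : Bool → ℝ) (T : Bool → ℝ)
    (hT : ∀ x, T x = (1 - ε) * f x + ε * f (!x)) :
    ((|T false| ^ q + |T true| ^ q) / 2) ^ (1 / q) ≤
      ((|f false| ^ p + |f true| ^ p) / 2) ^ (1 / p) := by
  have hρ : 0 < 1 - 2 * ε := by linarith
  have hq₂ : 2 ≤ q := by rw [hq, le_div_iff₀ hρ]; linarith
  have h_noise : (1 - 2 * ε) ^ 2 * (q - 1) ≤ p - 1 := by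
    rw [hp, hq]
    field_simp
    linarith
  obtain rfl : T = boolNoise ε f := funext hT
  simpa only [uniformLpNorm, expect_bool] using
    stmt11_general (by linarith) hq₂ h_noise f
end

section
/- Hypercontractivity of the n-dimensional noise operator: let 0 < ε < 1/2, p = 2 − 2ε, and q = (2 − 2ε)/(1 − 2ε), and let n be a natural number. For f : (Fin n → Bool) → ℝ define (T f)(x) = Σ_{y} (Π_i w(x i, y i)) · f(y), where w(a,b) = 1 − ε if a = b and w(a,b) = ε if a ≠ b. Then (2^(−n) · Σ_x |T f(x)|^q)^(1/q) ≤ (2^(−n) · Σ_y |f(y)|^p)^(1/p). (Equivalently, δ(D_{n,ε}) ≥ 2ε.) -/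
open Finset

/-- The `n`-dimensional noise operator with flip probability `ε` on the Boolean cube. -/
noncomputable def noiseOp (ε : ℝ) (n : ℕ) (f : (Fin n → Bool) → ℝ) (x : Fin n → Bool) : ℝ :=
  ∑ y : Fin n → Bool, (∏ i, if x i = y i then 1 - ε else ε) * f y

/-!
For `ρ = 1 - 2ε` the exponents `1 + ρ = 2 - 2ε` and `q` are conjugate, so by duality it suffices to
bound the bilinear form `𝔼 f · T g` by `‖f‖ ‖g‖`, both norms taken with exponent `1 + ρ`. Since
both norms have the same exponent and the kernel is nonnegative, such a bound tensorizes: apply it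
in the last coordinates with the first one fixed, and then in the first coordinate to the functions
`a ↦ ‖f (a, ·)‖` and `a ↦ ‖g (a, ·)‖`. On a single coordinate, writing the values of `f` as `u ± v`
and those of `g` as `u' ± v'`, the form is `u u' + ρ v v'`; by the Cauchy–Schwarz inequality it is
enough that `u² + ρ v² ≤ ‖f‖²`, which follows from Bernoulli's inequality and a second-order lower
bound for `(1 + y) ^ (1 + ρ) + (1 - y) ^ (1 + ρ)`.
-/

open scoped BigOperators Kronecker Matrix

section TwoPointInequality

lemma two_le_one_add_rpow_add_one_sub_rpow_s12 {s y : ℝ} (hs : s ≤ 0) (hy : |y| < 1) :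
    2 ≤ (1 + y) ^ s + (1 - y) ^ s := by
  obtain ⟨hy₁, hy₂⟩ := abs_lt.mp hy
  have hprod : 1 ≤ (1 + y) ^ s * (1 - y) ^ s := by
    rw [← Real.mul_rpow (by linarith) (by linarith)]
    exact Real.one_le_rpow_of_pos_of_le_one_of_nonpos (by nlinarith) (by nlinarith [sq_nonneg y]) hs
  have hpos : 0 < (1 + y) ^ s := Real.rpow_pos_of_pos (by linarith) s
  have hpos' : 0 < (1 - y) ^ s := Real.rpow_pos_of_pos (by linarith) s
  nlinarith [sq_nonneg ((1 + y) ^ s - (1 - y) ^ s)]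

lemma hasDerivAt_one_add_rpow (s : ℝ) {y : ℝ} (hy : 1 + y ≠ 0) :
    HasDerivAt (fun y : ℝ ↦ (1 + y) ^ s) (s * (1 + y) ^ (s - 1)) y := by
  simpa using ((hasDerivAt_id y).const_add 1).rpow_const (p := s) (Or.inl hy)

lemma hasDerivAt_one_sub_rpow (s : ℝ) {y : ℝ} (hy : 1 - y ≠ 0) :
    HasDerivAt (fun y : ℝ ↦ (1 - y) ^ s) (-(s * (1 - y) ^ (s - 1))) y := by
  simpa using ((hasDerivAt_id y).const_sub 1).rpow_const (p := s) (Or.inl hy)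

lemma two_mul_le_one_add_rpow_sub_one_sub_rpow {ρ y : ℝ} (hρ₀ : 0 ≤ ρ) (hρ₁ : ρ ≤ 1)
    (hy₀ : 0 ≤ y) (hy₁ : y ≤ 1) : 2 * ρ * y ≤ (1 + y) ^ ρ - (1 - y) ^ ρ := by
  have hmono : MonotoneOn (fun y : ℝ ↦ (1 + y) ^ ρ - (1 - y) ^ ρ - 2 * ρ * y) (Set.Icc 0 1) := by
    refine monotoneOn_of_hasDerivWithinAt_nonneg (convex_Icc 0 1)
      (f' := fun x ↦ ρ * ((1 + x) ^ (ρ - 1) + (1 - x) ^ (ρ - 1) - 2)) ?_ ?_ ?_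
    · exact Continuous.continuousOn (by fun_prop (disch := simp [hρ₀]))
    all_goals
      rw [interior_Icc]
      rintro x ⟨hx₀, hx₁⟩
    · have hderiv := ((hasDerivAt_one_add_rpow ρ (by linarith)).sub
        (hasDerivAt_one_sub_rpow ρ (by linarith))).sub ((hasDerivAt_id x).const_mul (2 * ρ))
      exact (hderiv.congr_deriv (by ring)).hasDerivWithinAt
    · have := two_le_one_add_rpow_add_one_sub_rpow_s12 (s := ρ - 1) (y := x) (by linarith)
        (abs_lt.mpr ⟨by linarith, hx₁⟩)
      exact mul_nonneg hρ₀ (by linarith)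
  have h := hmono (Set.left_mem_Icc.2 zero_le_one) ⟨hy₀, hy₁⟩ hy₀
  simp only [add_zero, sub_zero, mul_zero, sub_self] at h
  linarith

lemma two_add_mul_sq_le_one_add_rpow_add_one_sub_rpow_s12 {ρ y : ℝ} (hρ₀ : 0 ≤ ρ) (hρ₁ : ρ ≤ 1)
    (hy : |y| ≤ 1) : 2 + (1 + ρ) * ρ * y ^ 2 ≤ (1 + y) ^ (1 + ρ) + (1 - y) ^ (1 + ρ) := by
  wlog hy₀ : 0 ≤ y generalizing y
  · simpa [sub_eq_add_neg, add_comm] using this (y := -y) (by rwa [abs_neg]) (by linarith)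
  have hmono : MonotoneOn
      (fun y : ℝ ↦ (1 + y) ^ (1 + ρ) + (1 - y) ^ (1 + ρ) - (1 + ρ) * ρ * y ^ 2)
      (Set.Icc 0 1) := by
    refine monotoneOn_of_hasDerivWithinAt_nonneg (convex_Icc 0 1)
      (f' := fun x ↦ (1 + ρ) * ((1 + x) ^ ρ - (1 - x) ^ ρ - 2 * ρ * x)) ?_ ?_ ?_
    · have hexp : 0 ≤ 1 + ρ := by linarith
      exact Continuous.continuousOn (by fun_prop (disch := simp [hexp]))
    all_goals
      rw [interior_Icc]
      rintro x ⟨hx₀, hx₁⟩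
    · have hderiv := ((hasDerivAt_one_add_rpow (1 + ρ) (by linarith)).add
        (hasDerivAt_one_sub_rpow (1 + ρ) (by linarith))).sub
        ((hasDerivAt_pow 2 x).const_mul ((1 + ρ) * ρ))
      refine (hderiv.congr_deriv ?_).hasDerivWithinAt
      rw [add_sub_cancel_left]
      ring
    · have := two_mul_le_one_add_rpow_sub_one_sub_rpow hρ₀ hρ₁ hx₀.le hx₁.le
      exact mul_nonneg (by linarith) (by linarith)
  have h := hmono (Set.left_mem_Icc.2 zero_le_one) ⟨hy₀, (abs_le.mp hy).2⟩ hy₀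
  norm_num at h
  linarith

lemma one_add_mul_sq_rpow_le {ρ y : ℝ} (hρ₀ : 0 ≤ ρ) (hρ₁ : ρ ≤ 1) (hy : |y| ≤ 1) :
    (1 + ρ * y ^ 2) ^ ((1 + ρ) / 2) ≤ ((1 + y) ^ (1 + ρ) + (1 - y) ^ (1 + ρ)) / 2 := by
  have hbernoulli : (1 + ρ * y ^ 2) ^ ((1 + ρ) / 2) ≤ 1 + (1 + ρ) / 2 * (ρ * y ^ 2) :=
    rpow_one_add_le_one_add_mul_self (by nlinarith [sq_nonneg y]) (by linarith) (by linarith)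
  linarith [two_add_mul_sq_le_one_add_rpow_add_one_sub_rpow_s12 hρ₀ hρ₁ hy]

lemma sq_add_mul_sq_rpow_le {ρ a b : ℝ} (hρ₀ : 0 ≤ ρ) (hρ₁ : ρ ≤ 1) (ha : 0 ≤ a) (hb : 0 ≤ b) :
    (((a + b) / 2) ^ 2 + ρ * ((a - b) / 2) ^ 2) ^ ((1 + ρ) / 2) ≤
      (a ^ (1 + ρ) + b ^ (1 + ρ)) / 2 := by
  -- If `a = b = 0` then `y = 0`, by the convention `0 / 0 = 0`, and the identities below persist.
  set u := (a + b) / 2 with hu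
  set y := (a - b) / (a + b) with hy
  have huy : u * y = (a - b) / 2 := by
    rcases (add_nonneg ha hb).eq_or_lt with h | h
    · have ha₀ : a = 0 := by linarith
      have hb₀ : b = 0 := by linarith
      rw [hu, ha₀, hb₀]
      simp
    · rw [hu, hy]; field_simp
  have hu₀ : 0 ≤ u := by positivity
  have hy₁ : |y| ≤ 1 := by
    rw [hy, abs_div, abs_of_nonneg (add_nonneg ha hb)]
    exact div_le_one_of_le₀ (abs_le.mpr ⟨by linarith, by linarith⟩) (add_nonneg ha hb)
  obtain ⟨hy₂, hy₃⟩ := abs_le.mp hy₁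
  have ha' : a = u * (1 + y) := by linarith
  have hb' : b = u * (1 - y) := by linarith
  calc (u ^ 2 + ρ * ((a - b) / 2) ^ 2) ^ ((1 + ρ) / 2)
      = (u ^ 2 * (1 + ρ * y ^ 2)) ^ ((1 + ρ) / 2) := by rw [← huy]; ring_nf
    _ = u ^ (1 + ρ) * (1 + ρ * y ^ 2) ^ ((1 + ρ) / 2) := by
      rw [Real.mul_rpow (by positivity) (by positivity), ← Real.rpow_natCast_mul hu₀]
      congr 2
      push_cast
      ring
    _ ≤ u ^ (1 + ρ) * (((1 + y) ^ (1 + ρ) + (1 - y) ^ (1 + ρ)) / 2) := by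
      gcongr
      exact one_add_mul_sq_rpow_le hρ₀ hρ₁ hy₁
    _ = (a ^ (1 + ρ) + b ^ (1 + ρ)) / 2 := by
      rw [ha', hb', Real.mul_rpow hu₀ (by linarith), Real.mul_rpow hu₀ (by linarith)]
      ring

end TwoPointInequality

section UnifNorm

variable {α β : Type*} [Fintype α] [Fintype β] {p : ℝ}

/-- The `L^p` norm of a function on a finite type with respect to the uniform probability
measure, for a real exponent `p`. -/
noncomputable def unifNorm (p : ℝ) (f : α → ℝ) : ℝ :=
  (𝔼 x, |f x| ^ p) ^ (1 / p)

lemma unifNorm_nonneg (p : ℝ) (f : α → ℝ) : 0 ≤ unifNorm p f :=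
  Real.rpow_nonneg (expect_nonneg fun _ _ ↦ by positivity) _

lemma unifNorm_rpow (hp : p ≠ 0) (f : α → ℝ) : unifNorm p f ^ p = 𝔼 x, |f x| ^ p := by
  rw [unifNorm, ← Real.rpow_mul (expect_nonneg fun _ _ ↦ by positivity), one_div_mul_cancel hp,
    Real.rpow_one]

lemma unifNorm_abs (p : ℝ) (f : α → ℝ) : unifNorm p |f| = unifNorm p f := by
  simp only [unifNorm, Pi.abs_apply, abs_abs]

lemma unifNorm_mono (hp : 0 ≤ p) {f g : α → ℝ} (h : |f| ≤ |g|) : unifNorm p f ≤ unifNorm p g :=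
  Real.rpow_le_rpow (expect_nonneg fun _ _ ↦ by positivity)
    (expect_le_expect fun x _ ↦ Real.rpow_le_rpow (abs_nonneg _) (h x) hp) (by positivity)

lemma unifNorm_comp_equiv (p : ℝ) (e : α ≃ β) (f : β → ℝ) : unifNorm p (f ∘ e) = unifNorm p f :=
  congrArg (· ^ (1 / p)) (Fintype.expect_equiv e _ _ fun _ ↦ rfl)

lemma unifNorm_unique [Unique α] (hp : p ≠ 0) (f : α → ℝ) : unifNorm p f = |f default| := by
  simp [unifNorm, Real.rpow_rpow_inv (abs_nonneg _) hp]

lemma unifNorm_bool (p : ℝ) (f : Bool → ℝ) :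
    unifNorm p f = ((|f true| ^ p + |f false| ^ p) / 2) ^ (1 / p) := by
  rw [unifNorm, Fintype.expect_eq_sum_div_card, Fintype.sum_bool, Fintype.card_bool, Nat.cast_two]

lemma unifNorm_cube (p : ℝ) {n : ℕ} (f : (Fin n → Bool) → ℝ) :
    unifNorm p f = (((2 : ℝ) ^ n)⁻¹ * ∑ x, |f x| ^ p) ^ (1 / p) := by
  simp [unifNorm, Fintype.expect_eq_sum_div_card, div_eq_inv_mul]

lemma unifNorm_unifNorm (hp : p ≠ 0) (f : α × β → ℝ) :
    unifNorm p (fun a ↦ unifNorm p fun b ↦ f (a, b)) = unifNorm p f := by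
  rw [unifNorm, unifNorm, ← univ_product_univ, expect_product]
  simp only [abs_of_nonneg (unifNorm_nonneg _ _), unifNorm_rpow hp]

end UnifNorm

section Kernel

variable {α β γ δ : Type*} {K : Matrix α β ℝ}

/-- The `n`-th tensor power of the kernel `K`, acting independently on each of `n` coordinates. -/
def tensorPow (K : Matrix α β ℝ) (n : ℕ) : Matrix (Fin n → α) (Fin n → β) ℝ :=
  Matrix.of fun x y ↦ ∏ i, K (x i) (y i)

lemma tensorPow_nonneg (hK : ∀ a b, 0 ≤ K a b) (n : ℕ) (x : Fin n → α) (y : Fin n → β) :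
    0 ≤ tensorPow K n x y :=
  prod_nonneg (s := univ) fun i _ ↦ hK (x i) (y i)

lemma tensorPow_succ (K : Matrix α β ℝ) (n : ℕ) :
    tensorPow K (n + 1) = (K ⊗ₖ tensorPow K n).submatrix
      (Fin.consEquiv fun _ ↦ α).symm (Fin.consEquiv fun _ ↦ β).symm := by
  ext x y
  simp [tensorPow, Fin.prod_univ_succ, Fin.consEquiv, Fin.tail]

lemma kronecker_mulVec_apply [Fintype β] [Fintype δ] (K : Matrix α β ℝ) (L : Matrix γ δ ℝ)
    (g : β × δ → ℝ) (a : α) (c : γ) :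
    ((K ⊗ₖ L) *ᵥ g) (a, c) = ∑ b, K a b * (L *ᵥ fun d ↦ g (b, d)) c := by
  simp [Matrix.mulVec, dotProduct, Fintype.sum_prod_type, mul_sum, mul_assoc]

lemma abs_mulVec_le [Fintype β] (hK : ∀ a b, 0 ≤ K a b) (f : β → ℝ) : |K *ᵥ f| ≤ K *ᵥ |f| := fun a ↦
  calc |∑ b, K a b * f b| ≤ ∑ b, |K a b * f b| := abs_sum_le_sum_abs _ _
    _ = ∑ b, K a b * |f b| := by simp only [abs_mul, abs_of_nonneg (hK a _)]

end Kernel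

section DualContraction

variable {α β γ δ : Type*} [Fintype α] [Fintype β] [Fintype γ] [Fintype δ]
variable {p q : ℝ} {K : Matrix α β ℝ} {L : Matrix γ δ ℝ}

/-- The kernel `K` contracts `L^p` into its dual, expressed through the bilinear form of `K`, which
averages over rows and sums over columns. Only nonnegative functions are tested, which is enough
for nonnegative kernels. -/
def IsDualContraction (p : ℝ) (K : Matrix α β ℝ) : Prop :=
  ∀ ⦃f : α → ℝ⦄ ⦃g : β → ℝ⦄, 0 ≤ f → 0 ≤ g →
    𝔼 x, f x * (K *ᵥ g) x ≤ unifNorm p f * unifNorm p g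

namespace IsDualContraction

lemma submatrix (hK : IsDualContraction p K) (e₁ : γ ≃ α) (e₂ : δ ≃ β) :
    IsDualContraction p (K.submatrix e₁ e₂) := by
  intro f g hf hg
  calc 𝔼 x, f x * (K.submatrix e₁ e₂ *ᵥ g) x
      = 𝔼 x, (f ∘ e₁.symm) x * (K *ᵥ (g ∘ e₂.symm)) x := by
        refine Fintype.expect_equiv e₁ _ _ fun x ↦ ?_
        simp [Matrix.submatrix_mulVec_equiv]
    _ ≤ unifNorm p (f ∘ e₁.symm) * unifNorm p (g ∘ e₂.symm) := hK (fun _ ↦ hf _) fun _ ↦ hg _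
    _ = unifNorm p f * unifNorm p g := by simp only [unifNorm_comp_equiv]

lemma kronecker (hp : p ≠ 0) (hK₀ : ∀ a b, 0 ≤ K a b) (hK : IsDualContraction p K)
    (hL : IsDualContraction p L) : IsDualContraction p (K ⊗ₖ L) := by
  intro f g hf hg
  calc 𝔼 x, f x * ((K ⊗ₖ L) *ᵥ g) x
      = 𝔼 a, ∑ b, K a b * 𝔼 c, f (a, c) * (L *ᵥ fun d ↦ g (b, d)) c := by
        rw [← univ_product_univ, expect_product]
        simp only [kronecker_mulVec_apply, mul_expect, ← expect_sum_comm, mul_sum, mul_left_comm]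
    _ ≤ 𝔼 a, ∑ b, K a b *
          ((unifNorm p fun c ↦ f (a, c)) * unifNorm p fun d ↦ g (b, d)) := by
        gcongr with a _ b _
        · exact hK₀ a b
        · exact hL (fun _ ↦ hf _) fun _ ↦ hg _
    _ = 𝔼 a, (unifNorm p fun c ↦ f (a, c)) *
          (K *ᵥ fun b ↦ unifNorm p fun d ↦ g (b, d)) a := by
        simp only [Matrix.mulVec, dotProduct, mul_sum, mul_left_comm]
    _ ≤ unifNorm p (fun a ↦ unifNorm p fun c ↦ f (a, c)) *
          unifNorm p (fun b ↦ unifNorm p fun d ↦ g (b, d)) :=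
        hK (fun _ ↦ unifNorm_nonneg _ _) fun _ ↦ unifNorm_nonneg _ _
    _ = unifNorm p f * unifNorm p g := by rw [unifNorm_unifNorm hp, unifNorm_unifNorm hp]

lemma tensorPow (hp : p ≠ 0) (hK₀ : ∀ a b, 0 ≤ K a b) (hK : IsDualContraction p K) (n : ℕ) :
    IsDualContraction p (tensorPow K n) := by
  induction n with
  | zero =>
    intro f g _ _
    rw [unifNorm_unique hp, unifNorm_unique hp, ← abs_mul]
    simpa [_root_.tensorPow, Matrix.mulVec, dotProduct, Fintype.expect_eq_sum_div_card]
      using le_abs_self (f default * g default)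
  | succ n ih =>
    rw [tensorPow_succ]
    exact (kronecker hp hK₀ hK ih).submatrix _ _

lemma unifNorm_mulVec_le_of_nonneg (hpq : p.HolderConjugate q) (hK₀ : ∀ a b, 0 ≤ K a b)
    (hK : IsDualContraction p K) {g : β → ℝ} (hg : 0 ≤ g) :
    unifNorm q (K *ᵥ g) ≤ unifNorm p g := by
  set h := K *ᵥ g
  have hh : 0 ≤ h := fun a ↦ sum_nonneg fun b _ ↦ mul_nonneg (hK₀ a b) (hg b)
  -- The extremal function of Hölder's inequality for `h`.
  set w : α → ℝ := fun x ↦ h x ^ (q - 1)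
  have hw : 0 ≤ w := fun x ↦ Real.rpow_nonneg (hh x) _
  have hwh : 𝔼 x, w x * h x = 𝔼 x, |h x| ^ q := by
    refine expect_congr rfl fun x _ ↦ ?_
    rw [abs_of_nonneg (hh x), ← Real.rpow_add_one' (hh x) (by simpa using hpq.symm.ne_zero),
      sub_add_cancel]
  have hw_norm : unifNorm p w = (𝔼 x, |h x| ^ q) ^ (1 / p) := by
    simp only [unifNorm, abs_of_nonneg (hw _), abs_of_nonneg (hh _), w, ← Real.rpow_mul (hh _),
      hpq.symm.sub_one_mul_conj]
  have key : 𝔼 x, |h x| ^ q ≤ (𝔼 x, |h x| ^ q) ^ (1 / p) * unifNorm p g := by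
    rw [← hw_norm]
    exact hwh.symm.trans_le (hK hw hg)
  have hA : 0 ≤ 𝔼 x, |h x| ^ q := expect_nonneg fun _ _ ↦ by positivity
  rw [unifNorm]
  rcases hA.eq_or_lt with h0 | hpos
  · rw [← h0, Real.zero_rpow hpq.symm.one_div_ne_zero]
    exact unifNorm_nonneg p g
  · rw [one_div q, ← hpq.one_sub_inv, Real.rpow_sub hpos, Real.rpow_one, ← one_div p]
    exact div_le_of_le_mul₀ (by positivity) (unifNorm_nonneg p g) (by rwa [mul_comm])

theorem unifNorm_mulVec_le (hpq : p.HolderConjugate q) (hK₀ : ∀ a b, 0 ≤ K a b)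
    (hK : IsDualContraction p K) (f : β → ℝ) : unifNorm q (K *ᵥ f) ≤ unifNorm p f :=
  calc unifNorm q (K *ᵥ f) ≤ unifNorm q (K *ᵥ |f|) :=
        unifNorm_mono hpq.symm.nonneg ((abs_mulVec_le hK₀ f).trans (le_abs_self _))
    _ ≤ unifNorm p |f| := hK.unifNorm_mulVec_le_of_nonneg hpq hK₀ (abs_nonneg f)
    _ = unifNorm p f := unifNorm_abs p f

end IsDualContraction

end DualContraction

section FlipKernel

/-- The transition matrix of a single bit that is flipped with probability `ε`. -/
def flipKernel (ε : ℝ) : Matrix Bool Bool ℝ :=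
  Matrix.of fun a b ↦ if a = b then 1 - ε else ε

variable {ε : ℝ}

lemma flipKernel_nonneg (hε₀ : 0 ≤ ε) (hε₁ : ε ≤ 1) (a b : Bool) : 0 ≤ flipKernel ε a b :=
  ite_nonneg (sub_nonneg.mpr hε₁) hε₀

lemma noiseOp_eq_tensorPow_mulVec (ε : ℝ) (n : ℕ) (f : (Fin n → Bool) → ℝ) :
    noiseOp ε n f = tensorPow (flipKernel ε) n *ᵥ f :=
  rfl

lemma expect_mul_flipKernel_mulVec (ε : ℝ) (f g : Bool → ℝ) :
    𝔼 x, f x * (flipKernel ε *ᵥ g) x =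
      (f true + f false) / 2 * ((g true + g false) / 2) +
        (1 - 2 * ε) * ((f true - f false) / 2 * ((g true - g false) / 2)) := by
  rw [Fintype.expect_eq_sum_div_card]
  simp [flipKernel, Matrix.mulVec, dotProduct]
  ring

lemma sq_add_mul_sq_le_unifNorm_sq {ρ : ℝ} (hρ₀ : 0 ≤ ρ) (hρ₁ : ρ ≤ 1) {f : Bool → ℝ}
    (hf : 0 ≤ f) :
    ((f true + f false) / 2) ^ 2 + ρ * ((f true - f false) / 2) ^ 2 ≤ unifNorm (1 + ρ) f ^ 2 := by
  set s := ((f true + f false) / 2) ^ 2 + ρ * ((f true - f false) / 2) ^ 2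
  have hs : 0 ≤ s := by positivity
  calc s = ((s ^ ((1 + ρ) / 2)) ^ (1 / (1 + ρ))) ^ 2 := by
        rw [← Real.rpow_mul hs, ← Real.rpow_mul_natCast hs]
        have : (1 + ρ) / 2 * (1 / (1 + ρ)) * (2 : ℕ) = 1 := by push_cast; field_simp
        rw [this, Real.rpow_one]
    _ ≤ unifNorm (1 + ρ) f ^ 2 := by
        rw [unifNorm_bool, abs_of_nonneg (hf true), abs_of_nonneg (hf false)]
        gcongr
        exact sq_add_mul_sq_rpow_le hρ₀ hρ₁ (hf true) (hf false)

lemma isDualContraction_flipKernel (hε₀ : 0 ≤ ε) (hε₁ : ε ≤ 1 / 2) :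
    IsDualContraction (2 - 2 * ε) (flipKernel ε) := by
  intro f g hf hg
  set ρ := 1 - 2 * ε with hρ
  have hρ₀ : 0 ≤ ρ := by linarith
  have hρ₁ : ρ ≤ 1 := by linarith
  have hp : 2 - 2 * ε = 1 + ρ := by rw [hρ]; ring
  have hF := sq_add_mul_sq_le_unifNorm_sq hρ₀ hρ₁ hf
  have hG := sq_add_mul_sq_le_unifNorm_sq hρ₀ hρ₁ hg
  rw [expect_mul_flipKernel_mulVec, ← hρ, hp]
  set u := (f true + f false) / 2
  set v := (f true - f false) / 2
  set u' := (g true + g false) / 2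
  set v' := (g true - g false) / 2
  refine le_of_sq_le_sq ?_ (mul_nonneg (unifNorm_nonneg _ f) (unifNorm_nonneg _ g))
  calc (u * u' + ρ * (v * v')) ^ 2
      ≤ (u * u' + ρ * (v * v')) ^ 2 + ρ * (u * v' - u' * v) ^ 2 :=
        le_add_of_nonneg_right (by positivity)
    _ = (u ^ 2 + ρ * v ^ 2) * (u' ^ 2 + ρ * v' ^ 2) := by ring
    _ ≤ unifNorm (1 + ρ) f ^ 2 * unifNorm (1 + ρ) g ^ 2 := by gcongr
    _ = (unifNorm (1 + ρ) f * unifNorm (1 + ρ) g) ^ 2 := (mul_pow _ _ 2).symm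

end FlipKernel

/-- Hypercontractivity of the `n`-dimensional noise operator (`δ(D_{n,ε}) ≥ 2ε`). -/
theorem stmt12 (ε : ℝ) (hε0 : 0 < ε) (hε1 : ε < 1 / 2)
    (p q : ℝ) (hp : p = 2 - 2 * ε) (hq : q = (2 - 2 * ε) / (1 - 2 * ε))
    (n : ℕ) (f : (Fin n → Bool) → ℝ) :
    (((2 : ℝ) ^ n)⁻¹ * ∑ x : Fin n → Bool, |noiseOp ε n f x| ^ q) ^ (1 / q) ≤
      (((2 : ℝ) ^ n)⁻¹ * ∑ y : Fin n → Bool, |f y| ^ p) ^ (1 / p) := by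
  have hpq : p.HolderConjugate q := by
    rw [Real.holderConjugate_iff_eq_conjExponent (by linarith), hp, hq]
    ring_nf
  have hK₀ : ∀ a b, 0 ≤ flipKernel ε a b := flipKernel_nonneg hε0.le (by linarith)
  have hK : IsDualContraction p (flipKernel ε) :=
    hp ▸ isDualContraction_flipKernel hε0.le hε1.le
  rw [← unifNorm_cube, ← unifNorm_cube, noiseOp_eq_tensorPow_mulVec]
  exact (hK.tensorPow hpq.ne_zero hK₀ n).unifNorm_mulVec_le hpq (tensorPow_nonneg hK₀ n) f
end

section
/- Lower bound on Λ(ε, τ), second regime: let 0 < ε < 1 and let α be a real number with 1 − √(1 − ε) ≤ α < 1/2, and set τ = H(α). For each n let k_n = ⌊εn⌋ and s_n = ⌊(2 : ℝ)^(τn)⌋; let R_n be the maximum, over subsets A, B of the Boolean cube Fin n → Bool with |A| ≤ s_n and |B| ≤ s_n, of the number of pairs (x, y) ∈ A × B with Hamming distance exactly k_n; and let G_n = 2^n · (n choose k_n). Then liminf_{n → ∞} (logb 2 ((R_n : ℝ) / G_n)) / n ≥ −(1 + H(ε) − τ − α·H(ε/(2α)) − (1 − α)·H(ε/(2(1 −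 α)))). -/
open Finset Filter

/-- The maximal number of pairs at Hamming distance `⌊ε n⌋` inside a rectangle `A × B`
with `|A|, |B| ≤ ⌊2^(τ n)⌋`. -/
noncomputable def Rn (τ ε : ℝ) (n : ℕ) : ℕ :=
  ((Finset.univ.powerset.filter
      fun A : Finset (Fin n → Bool) => A.card ≤ ⌊(2 : ℝ) ^ (τ * n)⌋₊) ×ˢ
   (Finset.univ.powerset.filter
      fun B : Finset (Fin n → Bool) => B.card ≤ ⌊(2 : ℝ) ^ (τ * n)⌋₊)).sup
    fun AB => ((AB.1 ×ˢ AB.2).filter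
      fun p => hammingDist p.1 p.2 = ⌊ε * n⌋₊).card

/-- The total number of pairs of points of the Boolean cube at Hamming distance `⌊ε n⌋`. -/
noncomputable def Gn (ε : ℝ) (n : ℕ) : ℕ := 2 ^ n * n.choose ⌊ε * n⌋₊

/-- The binary entropy function (base-2 logarithms). -/
noncomputable def binH (t : ℝ) : ℝ := -t * Real.logb 2 t - (1 - t) * Real.logb 2 (1 - t)

/-!
Take `A = B` to be the Hamming ball of radius `⌊α n⌋`, which has at most `2 ^ (H(α) n)` points
because each of them has weight at least `2 ^ (-H(α) n)` under the product Bernoulli(`α`) measure.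
A point `S` of the boundary layer `|S| = ⌊α n⌋` is at distance `k = ⌊ε n⌋` from many points of the
ball: delete about `k / 2` elements of `S` and add about `k / 2` elements of its complement, never
more than were deleted. Stirling's formula gives the exponential rates of the three binomial
coefficients counting these choices.
-/

open Real (negMulLog binEntropy)
open scoped Topology Nat

lemma binH_eq_binEntropy_div (t : ℝ) : binH t = binEntropy t / Real.log 2 := by
  rw [Real.binEntropy_eq_negMulLog_add_negMulLog_one_sub, negMulLog, negMulLog, binH, Real.logb,
    Real.logb]
  ring

lemma negMulLog_mul_add_negMulLog_mul_one_sub (x p : ℝ) :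
    negMulLog (x * p) + negMulLog (x * (1 - p)) = negMulLog x + x * binEntropy p := by
  rw [Real.negMulLog_mul, Real.negMulLog_mul, Real.binEntropy_eq_negMulLog_add_negMulLog_one_sub]
  ring

lemma log_factorial_le (n : ℕ) : Real.log n ! ≤ n * Real.log n - n + (√n + 1) := by
  rcases n with _ | n
  · simp
  have hn : (0 : ℝ) < (n + 1 : ℕ) := by positivity
  have hstirling : Real.log (Stirling.stirlingSeq (n + 1)) ≤ Real.log (Stirling.stirlingSeq 1) :=
    Stirling.log_stirlingSeq'_antitone n.zero_le
  rw [Stirling.log_stirlingSeq_formula, Real.log_mul two_ne_zero hn.ne',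
    Real.log_div hn.ne' (Real.exp_ne_zero 1), Real.log_exp, Stirling.stirlingSeq_one,
    Real.log_div (Real.exp_ne_zero 1) (by positivity), Real.log_exp,
    Real.log_sqrt zero_le_two] at hstirling
  have hsqrt : Real.log (n + 1 : ℕ) / 2 ≤ √(n + 1 : ℕ) := by
    rw [← Real.log_sqrt hn.le]
    exact Real.log_le_self (Real.sqrt_nonneg _)
  linarith

lemma le_log_factorial (n : ℕ) : n * Real.log n - n ≤ Real.log n ! := by
  rcases n with _ | n
  · simp
  have hstirling := Stirling.le_log_factorial_stirling n.succ_ne_zero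
  have hlog : 0 ≤ Real.log (n + 1 : ℕ) := Real.log_natCast_nonneg _
  have hpi : 0 ≤ Real.log (2 * Real.pi) := Real.log_nonneg (by linarith [Real.pi_gt_three])
  linarith

lemma log_factorial_div_sub_eq (a n : ℕ) :
    Real.log a ! / n - (a : ℝ) / n * Real.log n =
      -negMulLog (a / n) - (a : ℝ) / n + (Real.log a ! - (a * Real.log a - a)) / n := by
  rcases eq_or_ne a 0 with rfl | ha
  · simp
  rcases eq_or_ne n 0 with rfl | hn
  · simp
  rw [negMulLog, Real.log_div (Nat.cast_ne_zero.2 ha) (Nat.cast_ne_zero.2 hn)]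
  ring

lemma tendsto_log_factorial_div {a : ℕ → ℕ} {c : ℝ}
    (ha : Tendsto (fun n => (a n : ℝ) / n) atTop (𝓝 c)) :
    Tendsto (fun n => Real.log (a n)! / n - (a n : ℝ) / n * Real.log n) atTop
      (𝓝 (-negMulLog c - c)) := by
  have hinv : Tendsto (fun n : ℕ => (n : ℝ)⁻¹) atTop (𝓝 0) := tendsto_inv_atTop_nhds_zero_nat
  have hbound : Tendsto (fun n => (√(a n) + 1) / n) atTop (𝓝 0) := by
    have h := ((ha.mul hinv).sqrt).add hinv
    simp only [mul_zero, Real.sqrt_zero, add_zero] at h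
    refine h.congr fun n => ?_
    rw [div_mul_eq_mul_div, ← div_eq_mul_inv, div_div, Real.sqrt_div (Nat.cast_nonneg _),
      Real.sqrt_mul_self (Nat.cast_nonneg _), add_div, one_div]
  have herror : Tendsto (fun n => (Real.log (a n)! - (a n * Real.log (a n) - a n)) / n) atTop
      (𝓝 0) := by
    refine squeeze_zero (fun n => ?_) (fun n => ?_) hbound
    · exact div_nonneg (sub_nonneg.2 (le_log_factorial _)) n.cast_nonneg
    · gcongr
      linarith [log_factorial_le (a n)]
  have hmain := ((Real.continuous_negMulLog.tendsto c).comp ha).neg.sub ha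
  simpa only [Function.comp_apply, add_zero, log_factorial_div_sub_eq] using hmain.add herror

lemma tendsto_natCast_sub_div {m j : ℕ → ℕ} {x y : ℝ}
    (hm : Tendsto (fun n => (m n : ℝ) / n) atTop (𝓝 x))
    (hj : Tendsto (fun n => (j n : ℝ) / n) atTop (𝓝 y)) (hjm : ∀ᶠ n in atTop, j n ≤ m n) :
    Tendsto (fun n => ((m n - j n : ℕ) : ℝ) / n) atTop (𝓝 (x - y)) := by
  refine (hm.sub hj).congr' ?_
  filter_upwards [hjm] with n h
  rw [Nat.cast_sub h, sub_div]

lemma log_choose {m j : ℕ} (h : j ≤ m) :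
    Real.log (m.choose j) = Real.log m ! - Real.log j ! - Real.log (m - j)! := by
  rw [Nat.cast_choose ℝ h, Real.log_div (by positivity) (by positivity),
    Real.log_mul (by positivity) (by positivity), sub_sub]

/-- `f n = 2 ^ (r * n + o(n))`: the exponential growth rate of `f`. -/
def HasExpRate (f : ℕ → ℝ) (r : ℝ) : Prop :=
  (∀ᶠ n in atTop, 0 < f n) ∧ Tendsto (fun n => Real.logb 2 (f n) / n) atTop (𝓝 r)

namespace HasExpRate

variable {f g : ℕ → ℝ} {r s : ℝ}

lemma mul (hf : HasExpRate f r) (hg : HasExpRate g s) :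
    HasExpRate (fun n => f n * g n) (r + s) := by
  refine ⟨?_, (hf.2.add hg.2).congr' ?_⟩
  · filter_upwards [hf.1, hg.1] with n hfn hgn using mul_pos hfn hgn
  · filter_upwards [hf.1, hg.1] with n hfn hgn
    rw [Real.logb_mul hfn.ne' hgn.ne', add_div]

lemma div (hf : HasExpRate f r) (hg : HasExpRate g s) :
    HasExpRate (fun n => f n / g n) (r - s) := by
  refine ⟨?_, (hf.2.sub hg.2).congr' ?_⟩
  · filter_upwards [hf.1, hg.1] with n hfn hgn using div_pos hfn hgn
  · filter_upwards [hf.1, hg.1] with n hfn hgn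
    rw [Real.logb_div hfn.ne' hgn.ne', sub_div]

lemma two_pow : HasExpRate (fun n => 2 ^ n) 1 := by
  refine ⟨.of_forall fun n => by positivity, tendsto_const_nhds.congr' ?_⟩
  filter_upwards [eventually_ne_atTop 0] with n hn
  rw [Real.logb_pow, Real.logb_self_eq_one one_lt_two, mul_one, div_self (Nat.cast_ne_zero.2 hn)]

lemma choose {m j : ℕ → ℕ} {x p : ℝ}
    (hm : Tendsto (fun n => (m n : ℝ) / n) atTop (𝓝 x))
    (hj : Tendsto (fun n => (j n : ℝ) / n) atTop (𝓝 (x * p))) (hjm : ∀ᶠ n in atTop, j n ≤ m n) :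
    HasExpRate (fun n => (m n).choose (j n)) (x * binH p) := by
  refine ⟨?_, ?_⟩
  · filter_upwards [hjm] with n h using mod_cast Nat.choose_pos h
  have hlimit := (((tendsto_log_factorial_div hm).sub (tendsto_log_factorial_div hj)).sub
    (tendsto_log_factorial_div (tendsto_natCast_sub_div hm hj hjm))).div_const (Real.log 2)
  have hrate : (-negMulLog x - x - (-negMulLog (x * p) - x * p)
      - (-negMulLog (x - x * p) - (x - x * p))) / Real.log 2 = x * binH p := by
    rw [binH_eq_binEntropy_div, ← mul_div_assoc, show x - x * p = x * (1 - p) by ring]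
    congr 1
    linarith [negMulLog_mul_add_negMulLog_mul_one_sub x p]
  rw [hrate] at hlimit
  refine hlimit.congr' ?_
  filter_upwards [hjm] with n h
  rw [Real.logb, log_choose h, Nat.cast_sub h]
  ring

lemma le_liminf (hf : HasExpRate f r) (hfg : ∀ᶠ n in atTop, f n ≤ g n)
    (hg : ∀ᶠ n in atTop, g n ≤ 1) : r ≤ liminf (fun n => Real.logb 2 (g n) / n) atTop := by
  rw [← hf.2.liminf_eq]
  refine liminf_le_liminf ?_ hf.2.isBoundedUnder_ge ?_
  · filter_upwards [hf.1, hfg] with n hfn hfgn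
    gcongr
    exact one_lt_two
  · refine (isBoundedUnder_of_eventually_le (a := 0) ?_).isCoboundedUnder_ge
    filter_upwards [hf.1, hfg, hg] with n hfn hfgn hgn
    exact div_nonpos_of_nonpos_of_nonneg
      (Real.logb_nonpos one_lt_two (hfn.le.trans hfgn) hgn) n.cast_nonneg

end HasExpRate

section Cube

variable {ι : Type*} [Fintype ι]

variable (ι) in
/-- The Hamming ball of radius `r` around the origin of the cube `{0, 1}^ι`, each point being
encoded by its support. -/
def supportBall (r : ℕ) : Finset (Finset ι) := {S | #S ≤ r}

lemma card_supportBall_le {α : ℝ} (hα₀ : 0 < α) (hα : α ≤ 1 / 2) {r : ℕ}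
    (hr : r ≤ α * Fintype.card ι) :
    #(supportBall ι r) ≤ (2 : ℝ) ^ (binH α * Fintype.card ι) := by
  set n := Fintype.card ι
  have hβ₀ : 0 < 1 - α := by linarith
  have hweight : ∀ S ∈ supportBall ι r,
      (2 : ℝ) ^ (-(binH α * n)) ≤ α ^ #S * (1 - α) ^ (n - #S) := by
    intro S hS
    have hSr : #S ≤ α * n := le_trans (mod_cast (mem_filter_univ S).1 hS) hr
    have hlog : Real.logb 2 α ≤ Real.logb 2 (1 - α) :=
      Real.logb_le_logb_of_le one_lt_two hα₀ (by linarith)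
    rw [← Real.le_logb_iff_rpow_le one_lt_two (by positivity), Real.logb_mul (by positivity)
      (by positivity), Real.logb_pow, Real.logb_pow, Nat.cast_sub S.card_le_univ, binH]
    nlinarith [mul_nonneg (sub_nonneg.2 hSr) (sub_nonneg.2 hlog)]
  have htotal : #(supportBall ι r) * (2 : ℝ) ^ (-(binH α * n)) ≤ 1 :=
    calc #(supportBall ι r) * (2 : ℝ) ^ (-(binH α * n))
        ≤ ∑ S ∈ supportBall ι r, α ^ #S * (1 - α) ^ (n - #S) := by
          rw [← nsmul_eq_mul]
          exact card_nsmul_le_sum _ _ _ hweight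
      _ ≤ ∑ S : Finset ι, α ^ #S * (1 - α) ^ (n - #S) :=
          sum_le_univ_sum_of_nonneg fun S => by positivity
      _ = 1 := by rw [Fintype.sum_pow_mul_eq_add_pow, add_sub_cancel, one_pow]
  rwa [Real.rpow_neg zero_le_two, ← div_eq_mul_inv, div_le_one (by positivity)] at htotal

variable [DecidableEq ι]

/-- The identification of subsets of `ι` with points of the Boolean cube, a subset corresponding to
the point it supports. It transports counts of subsets to the cubes `Fin n → Bool`. -/
def supportEquiv : Finset ι ≃ (ι → Bool) where
  toFun S i := decide (i ∈ S)
  invFun x := {i | x i}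
  left_inv S := by ext i; simp
  right_inv x := by ext i; simp

lemma hammingDist_supportEquiv (S T : Finset ι) :
    hammingDist (supportEquiv S) (supportEquiv T) = #(S \ T) + #(T \ S) := by
  rw [← card_union_of_disjoint disjoint_sdiff_sdiff, hammingDist]
  congr 1
  ext i
  simp only [supportEquiv, Equiv.coe_fn_mk, ne_eq, decide_eq_decide, mem_filter_univ, mem_union,
    Finset.mem_sdiff]
  tauto

lemma card_pairs_hammingDist_le (k : ℕ) :
    #{p : (ι → Bool) × (ι → Bool) | hammingDist p.1 p.2 = k} ≤
      2 ^ Fintype.card ι * (Fintype.card ι).choose k := by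
  have hcard : #((univ : Finset (ι → Bool)) ×ˢ powersetCard k (univ : Finset ι)) =
      2 ^ Fintype.card ι * (Fintype.card ι).choose k := by simp
  rw [← hcard]
  refine card_le_card_of_injOn (fun p => (p.1, ({i | p.1 i ≠ p.2 i} : Finset ι)))
    (fun p hp => ?_) ?_
  · simpa [hammingDist] using hp
  · rintro ⟨x, y⟩ - ⟨x', y'⟩ - h
    obtain ⟨rfl, hdiff⟩ := Prod.mk.inj h
    refine Prod.ext rfl (funext fun i => ?_)
    have hi : x i ≠ y i ↔ x i ≠ y' i := by simpa using Finset.ext_iff.1 hdiff i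
    change y i = y' i
    revert hi
    cases x i <;> cases y i <;> cases y' i <;> simp

lemma card_sdiff_eq_sdiff_eq (S : Finset ι) (a b : ℕ) :
    #{T | #(S \ T) = a ∧ #(T \ S) = b} = (#S).choose a * (Fintype.card ι - #S).choose b := by
  have hcard : #(powersetCard a S ×ˢ powersetCard b Sᶜ) =
      (#S).choose a * (Fintype.card ι - #S).choose b := by
    rw [card_product, card_powersetCard, card_powersetCard, card_compl]
  rw [← hcard]
  refine card_nbij' (fun T => (S \ T, T \ S)) (fun P => (S \ P.1) ∪ P.2) ?_ ?_ ?_ ?_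
  · intro T hT
    have hsub : T \ S ⊆ Sᶜ := fun i hi => mem_compl.2 (Finset.mem_sdiff.1 hi).2
    simpa [mem_powersetCard, hsub] using hT
  · rintro ⟨U, V⟩ h
    obtain ⟨⟨hU, rfl⟩, hV, rfl⟩ := by
      simpa only [coe_product, Set.mem_prod, mem_coe, mem_powersetCard] using h
    simp only [coe_filter_univ, Set.mem_ofPred_eq]
    constructor <;> congr 1 <;> grind [mem_compl]
  · intro T _
    grind
  · rintro ⟨U, V⟩ h
    simp only [coe_product, Set.mem_prod, mem_coe, mem_powersetCard] at h
    ext i <;> grind [mem_compl]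

lemma card_pairs_card_sdiff (w a b : ℕ) :
    #{p : Finset ι × Finset ι | #p.1 = w ∧ #(p.1 \ p.2) = a ∧ #(p.2 \ p.1) = b} =
      (Fintype.card ι).choose w * (w.choose a * (Fintype.card ι - w).choose b) := by
  have hsigma : #{p : Finset ι × Finset ι | #p.1 = w ∧ #(p.1 \ p.2) = a ∧ #(p.2 \ p.1) = b} =
      ∑ S ∈ powersetCard w (univ : Finset ι), #{T | #(S \ T) = a ∧ #(T \ S) = b} := by
    simp only [card_filter, Fintype.sum_prod_type]
    rw [← sum_subset (subset_univ (powersetCard w (univ : Finset ι)))]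
    · refine sum_congr rfl fun S hS => sum_congr rfl fun T _ => ?_
      simp [(mem_powersetCard.1 hS).2]
    · intro S _ hS
      have : #S ≠ w := by simpa [mem_powersetCard] using hS
      simp [this]
  rw [hsigma, sum_congr rfl fun S hS => by
    rw [card_sdiff_eq_sdiff_eq, (mem_powersetCard.1 hS).2], sum_const, smul_eq_mul,
    card_powersetCard, card_univ]

lemma choose_mul_choose_mul_choose_le_card_pairs {w a b : ℕ} (hba : b ≤ a) :
    (Fintype.card ι).choose w * (w.choose a * (Fintype.card ι - w).choose b) ≤
      #{p ∈ supportBall ι w ×ˢ supportBall ι w | #(p.1 \ p.2) + #(p.2 \ p.1) = a + b} := by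
  rw [← card_pairs_card_sdiff]
  refine card_le_card fun p hp => ?_
  obtain ⟨hw, ha, hb⟩ := (mem_filter_univ p).1 hp
  have hcard : #p.2 ≤ w := by
    have h₁ := card_sdiff_add_card_inter p.1 p.2
    have h₂ := card_sdiff_add_card_inter p.2 p.1
    rw [inter_comm] at h₂
    omega
  simp [supportBall, hw, ha, hb, hcard]

end Cube

lemma Rn_le_Gn (τ ε : ℝ) (n : ℕ) : Rn τ ε n ≤ Gn ε n := by
  refine Finset.sup_le fun AB _ => ?_
  calc #{p ∈ AB.1 ×ˢ AB.2 | hammingDist p.1 p.2 = ⌊ε * n⌋₊}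
      ≤ #{p : (Fin n → Bool) × (Fin n → Bool) | hammingDist p.1 p.2 = ⌊ε * n⌋₊} :=
        card_le_card (filter_subset_filter _ (subset_univ _))
    _ ≤ Gn ε n := by simpa [Gn] using card_pairs_hammingDist_le (ι := Fin n) ⌊ε * n⌋₊

lemma card_pairs_le_Rn {τ ε : ℝ} {n : ℕ} {𝒜 ℬ : Finset (Finset (Fin n))}
    (h𝒜 : #𝒜 ≤ (2 : ℝ) ^ (τ * n)) (hℬ : #ℬ ≤ (2 : ℝ) ^ (τ * n)) :
    #{p ∈ 𝒜 ×ˢ ℬ | #(p.1 \ p.2) + #(p.2 \ p.1) = ⌊ε * n⌋₊} ≤ Rn τ ε n := by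
  let e := (supportEquiv (ι := Fin n)).toEmbedding
  have hle : #{p ∈ 𝒜.map e ×ˢ ℬ.map e | hammingDist p.1 p.2 = ⌊ε * n⌋₊} ≤ Rn τ ε n := by
    refine le_sup (f := fun AB : Finset (Fin n → Bool) × Finset (Fin n → Bool) =>
      #{p ∈ AB.1 ×ˢ AB.2 | hammingDist p.1 p.2 = ⌊ε * n⌋₊}) (b := (𝒜.map e, ℬ.map e)) ?_
    simpa using ⟨Nat.le_floor h𝒜, Nat.le_floor hℬ⟩
  rw [← prodMap_map_product, filter_map, card_map] at hle
  simpa [Function.comp_def, e, hammingDist_supportEquiv] using hle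

lemma choose_mul_choose_mul_choose_le_Rn {α ε : ℝ} (hα₀ : 0 < α) (hα : α ≤ 1 / 2)
    {n w a b : ℕ} (hw : w ≤ α * n) (hba : b ≤ a) (hab : a + b = ⌊ε * n⌋₊) :
    n.choose w * (w.choose a * (n - w).choose b) ≤ Rn (binH α) ε n := by
  have hball : #(supportBall (Fin n) w) ≤ (2 : ℝ) ^ (binH α * n) := by
    simpa using card_supportBall_le (ι := Fin n) hα₀ hα (by simpa using hw)
  have hpairs := choose_mul_choose_mul_choose_le_card_pairs (ι := Fin n) (w := w) hba
  rw [Fintype.card_fin, hab] at hpairs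
  exact hpairs.trans (card_pairs_le_Rn hball hball)

section Floor

lemma eventually_le_of_tendsto_div {j m : ℕ → ℕ} {x y : ℝ} (hxy : x < y)
    (hj : Tendsto (fun n => (j n : ℝ) / n) atTop (𝓝 x))
    (hm : Tendsto (fun n => (m n : ℝ) / n) atTop (𝓝 y)) : ∀ᶠ n in atTop, j n ≤ m n := by
  filter_upwards [hj.eventually_lt hm hxy, eventually_gt_atTop 0] with n hlt hn
  rw [div_lt_div_iff_of_pos_right (Nat.cast_pos.2 hn)] at hlt
  exact_mod_cast hlt.le

lemma tendsto_natCast_div_self : Tendsto (fun n : ℕ => (n : ℝ) / n) atTop (𝓝 1) := by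
  refine tendsto_const_nhds.congr' ?_
  filter_upwards [eventually_ne_atTop 0] with n hn
  rw [div_self (Nat.cast_ne_zero.2 hn)]

variable {c : ℝ}

lemma tendsto_natFloor_mul_div (hc : 0 ≤ c) :
    Tendsto (fun n : ℕ => (⌊c * n⌋₊ : ℝ) / n) atTop (𝓝 c) :=
  (tendsto_nat_floor_mul_div_atTop hc).comp tendsto_natCast_atTop_atTop

lemma natFloor_mul_le_self (hc : c ≤ 1) (n : ℕ) : ⌊c * n⌋₊ ≤ n :=
  Nat.floor_le_of_le (mul_le_of_le_one_left n.cast_nonneg hc)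

lemma two_mul_natFloor_half_mul_le (hc : 0 ≤ c) (n : ℕ) : 2 * ⌊c / 2 * n⌋₊ ≤ ⌊c * n⌋₊ := by
  refine Nat.le_floor ?_
  push_cast
  linarith [Nat.floor_le (show 0 ≤ c / 2 * n by positivity)]

end Floor

lemma hasExpRate_Gn {ε : ℝ} (hε₀ : 0 ≤ ε) (hε₁ : ε ≤ 1) :
    HasExpRate (fun n => Gn ε n) (1 + binH ε) := by
  have hchoose := HasExpRate.choose (p := ε) tendsto_natCast_div_self
    (by simpa using tendsto_natFloor_mul_div hε₀) (.of_forall (natFloor_mul_le_self hε₁))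
  simpa [Gn] using HasExpRate.two_pow.mul hchoose

lemma hasExpRate_choose_mul_choose_mul_choose {ε α : ℝ} (hε : 0 ≤ ε) (hεα : ε / 2 < α)
    (hεα' : ε / 2 < 1 - α) :
    HasExpRate
      (fun n => (n.choose ⌊α * n⌋₊ *
        ((⌊α * n⌋₊).choose (⌊ε * n⌋₊ - ⌊ε / 2 * n⌋₊) * (n - ⌊α * n⌋₊).choose ⌊ε / 2 * n⌋₊) : ℕ))
      (binH α + (α * binH (ε / (2 * α)) + (1 - α) * binH (ε / (2 * (1 - α))))) := by
  have hα₀ : 0 < α := by linarith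
  have hα₁ : 0 < 1 - α := by linarith
  have hw := tendsto_natFloor_mul_div hα₀.le
  have hb := tendsto_natFloor_mul_div (div_nonneg hε zero_le_two)
  have hwn : ∀ᶠ n : ℕ in atTop, ⌊α * n⌋₊ ≤ n := .of_forall (natFloor_mul_le_self (by linarith))
  have hwc := tendsto_natCast_sub_div tendsto_natCast_div_self hw hwn
  have ha := tendsto_natCast_sub_div (tendsto_natFloor_mul_div hε) hb <| .of_forall fun n => by
    have := two_mul_natFloor_half_mul_le hε n
    omega
  rw [sub_half] at ha
  have hlayer := HasExpRate.choose (p := α) tendsto_natCast_div_self (by simpa using hw) hwn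
  have hinside := HasExpRate.choose (p := ε / (2 * α)) hw
    (by convert ha using 2; field_simp) (eventually_le_of_tendsto_div hεα ha hw)
  have houtside := HasExpRate.choose (p := ε / (2 * (1 - α))) hwc
    (by convert hb using 2; field_simp) (eventually_le_of_tendsto_div hεα' hb hwc)
  simpa using hlayer.mul (hinside.mul houtside)

lemma half_lt_one_sub_sqrt_one_sub {ε : ℝ} (hε₀ : ε ≠ 0) (hε₁ : ε ≤ 1) :
    ε / 2 < 1 - √(1 - ε) := by
  have hsqrt : √(1 - ε) < 1 - ε / 2 := by
    rw [Real.sqrt_lt' (by linarith)]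
    linarith [sq_pos_of_ne_zero hε₀]
  linarith

theorem stmt15_general (ε α τ : ℝ) (hε : 0 ≤ ε) (hεα : ε / 2 < α) (hα : α ≤ 1 / 2)
    (hτ : τ = binH α) :
    liminf (fun n : ℕ => Real.logb 2 ((Rn τ ε n : ℝ) / (Gn ε n : ℝ)) / n) atTop ≥
      -(1 + binH ε - τ - α * binH (ε / (2 * α)) - (1 - α) * binH (ε / (2 * (1 - α)))) := by
  subst hτ
  have hα₀ : 0 < α := by linarith
  have hpairs := hasExpRate_choose_mul_choose_mul_choose hε hεα (by linarith)
  have hrate := hpairs.div (hasExpRate_Gn hε (by linarith))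
  have hliminf := hrate.le_liminf (g := fun n => Rn (binH α) ε n / Gn ε n)
    (.of_forall fun n => ?_) (.of_forall fun n => ?_)
  · linarith
  · have hb := two_mul_natFloor_half_mul_le hε n
    gcongr
    exact choose_mul_choose_mul_choose_le_Rn hα₀ hα (Nat.floor_le (by positivity)) (by omega)
      (by omega)
  · exact div_le_one_of_le₀ (mod_cast Rn_le_Gn _ ε n) (Nat.cast_nonneg _)

theorem stmt15 (ε α τ : ℝ) (hε0 : 0 < ε) (hε1 : ε < 1)
    (hα0 : 1 - Real.sqrt (1 - ε) ≤ α) (hα1 : α < 1 / 2) (hτ : τ = binH α) :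
    liminf (fun n : ℕ => Real.logb 2 ((Rn τ ε n : ℝ) / (Gn ε n : ℝ)) / n) atTop ≥
      -(1 + binH ε - τ - α * binH (ε / (2 * α)) - (1 - α) * binH (ε / (2 * (1 - α)))) :=
  stmt15_general ε α τ hε0.le ((half_lt_one_sub_sqrt_one_sub hε0.ne' hε1.le).trans_le hα0)
    hα1.le hτ
end
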